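/- Let P = (X, ≺) be a poset on |X| = n elements, let ω : X → ℝ_{>0} be a positive order-reversing weight function, fix z ∈ X and an integer 1 < k < n, and suppose N_ω(k) > 0. Then the following are equivalent: (a) N_ω(k)² = N_ω(k−1)·N_ω(k+1); (b) there exists s > 0 such that N_ω(k+1) = s·N_ω(k) = s²·N_ω(k−1); (c) there exists s > 0 such that f(x) > k for all x ≻ z, g(x) > n − k + 1 for all x ≺ z, and ω(L⁻¹(k−1)) = ω(L⁻¹(k+1)) = s for every linear extension L with L(z) = k. -/

import Mathlib

open scoped Classical BigOperators

noncomputable section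

variable {X : Type*} [Fintype X] [DecidableEq X] [PartialOrder X]

/-- A linear extension of the poset `X` with `n = |X|` elements, encoded as a bijection
`σ : X ≃ Fin n`; the value `L(x) ∈ {1, …, n}` of the usual description corresponds to
`(σ x : ℕ) + 1`. -/
def IsLinExt (σ : X ≃ Fin (Fintype.card X)) : Prop :=
  ∀ x y : X, x < y → σ x < σ y

/-- The weighted count `N_ω(k) = Σ_{L ∈ E, L(z) = k} Π_{x : L(x) < L(z)} ω(x)` over linear
extensions placing `z` in position `k`. -/
def Nw (ω : X → ℝ) (z : X) (k : ℕ) : ℝ :=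
  ∑ σ ∈ Finset.univ.filter (fun σ : X ≃ Fin (Fintype.card X) =>
      IsLinExt σ ∧ (σ z : ℕ) = k - 1),
    ∏ x ∈ Finset.univ.filter (fun x : X => σ x < σ z), ω x

/-- `f(x)`: the number of elements strictly below `x`. -/
def numBelow (x : X) : ℕ := (Finset.univ.filter (fun y : X => y < x)).card

/-- `g(x)`: the number of elements strictly above `x`. -/
def numAbove (x : X) : ℕ := (Finset.univ.filter (fun y : X => x < y)).card

/-!
Attach to every set `Y` containing `z` the set of pairs (side, extremal element on that side), and
to every word `s` in the two sides the weighted number of ways to peel `Y` down along `s`. This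
number is the value at constant vectors of a symmetric bilinear form `peelBilin`, an analogue of a
mixed volume, and `N_ω(k - 1)`, `N_ω(k)`, `N_ω(k + 1)` are its three values on the indicator
vectors of the two sides. The form is hyperbolic: on sets of three elements this is the monotonicity
of `ω`, and in general it follows by restricting to the facets `Y \ {x}` and applying
Perron–Frobenius to a suitable rescaling.

Equality in the resulting inequality `N_ω(k)² ≥ N_ω(k - 1) N_ω(k + 1)` forces the vector equal to
`1` below and `-r` above `z` into the kernel of the form. This property is inherited by every facet.
Following it along all peelings yields the bounds on `f` and `g`, and following it along the peeling
given by a linear extension down to a three-element set yields the condition on `ω`. Conversely,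
these conditions allow `z` to be exchanged with its neighbour in any linear extension.
-/

namespace WeightedStanley

open Finset

section HyperbolicForms

variable {V : Type*} [AddCommGroup V] [Module ℝ V] {B C : LinearMap.BilinForm ℝ V}

/-- A bilinear form satisfying the reversed Cauchy–Schwarz inequality in every direction `w` with
`0 < B w w`. For symmetric forms this says that `B` has at most one positive eigenvalue; it is the
form in which Alexandrov–Fenchel type inequalities are propagated. -/
def IsHyperbolic (B : LinearMap.BilinForm ℝ V) : Prop :=
  ∀ v w, 0 < B w w → B v v * B w w ≤ (B v w) ^ 2

theorem isHyperbolic_of_apply_eq {f g : V → ℝ} {a b c : ℝ}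
    (hB : ∀ v w, B v w = a * (f v * f w) + b * (f v * g w + g v * f w) + c * (g v * g w))
    (hdet : a * c ≤ b ^ 2) : IsHyperbolic B := by
  intro v w _
  have key : (B v w) ^ 2 - B v v * B w w = (b ^ 2 - a * c) * (f v * g w - f w * g v) ^ 2 := by
    simp only [hB]; ring
  have : 0 ≤ (b ^ 2 - a * c) * (f v * g w - f w * g v) ^ 2 :=
    mul_nonneg (sub_nonneg.2 hdet) (sq_nonneg _)
  linarith

theorem apply_sub_smul_self (hB : B.IsSymm) (v w : V) (r : ℝ) :
    B (v - r • w) (v - r • w) = B v v - 2 * r * B v w + r ^ 2 * B w w := by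
  simp only [map_sub, map_smul, LinearMap.sub_apply, LinearMap.smul_apply, smul_eq_mul, hB.eq w v]
  ring

theorem isHyperbolic_of_nonpos_on_ker (hB : B.IsSymm) (ℓ : V →ₗ[ℝ] ℝ)
    (hker : ∀ v, ℓ v = 0 → B v v ≤ 0) : IsHyperbolic B := by
  intro v w hw
  have hℓw : ℓ w ≠ 0 := fun h => (hker w h).not_gt hw
  have h := hker (v - (ℓ v / ℓ w) • w) (by
    rw [map_sub, map_smul, smul_eq_mul, div_mul_cancel₀ _ hℓw, sub_self])
  rw [apply_sub_smul_self hB] at h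
  nlinarith [sq_nonneg (B v w - ℓ v / ℓ w * B w w)]

theorem isHyperbolic_of_forall_add_smul (h : ∀ ε : ℝ, 0 < ε → IsHyperbolic (B + ε • C)) :
    IsHyperbolic B := by
  intro v w hw
  have htendsto (x y : V) : Filter.Tendsto (fun ε : ℝ => (B + ε • C) x y)
      (nhdsWithin 0 (Set.Ioi 0)) (nhds (B x y)) := by
    have hcont : Continuous fun ε : ℝ => B x y + ε * C x y := by fun_prop
    simpa using (hcont.tendsto 0).mono_left nhdsWithin_le_nhds
  refine le_of_tendsto_of_tendsto ((htendsto v v).mul (htendsto w w)) ((htendsto v w).pow 2) ?_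
  filter_upwards [(htendsto w w).eventually (lt_mem_nhds hw), self_mem_nhdsWithin] with ε hε hpos
  exact h ε hpos v w hε

theorem IsHyperbolic.self_le_div (h : IsHyperbolic B) (v : V) {w : V} (hw : 0 < B w w) :
    B v v ≤ (B v w) ^ 2 / B w w :=
  (le_div_iff₀ hw).2 (h v w hw)

theorem IsHyperbolic.self_nonpos (h : IsHyperbolic B) {u e : V} (he : 0 < B e e)
    (hue : B u e = 0) : B u u ≤ 0 := by
  have := h u e he
  rw [hue, zero_pow two_ne_zero] at this
  exact nonpos_of_mul_nonpos_left this he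

theorem IsHyperbolic.eq_zero (h : IsHyperbolic B) (hB : B.IsSymm) {u e : V} (he : 0 < B e e)
    (hue : B u e = 0) (huu : B u u = 0) : B u = 0 := by
  ext v
  by_contra hv
  have hv : B v u ≠ 0 := by simpa [hB.eq] using hv
  have key (t : ℝ) : (B v v - 2 * t * B v u) * B e e ≤ (B v e) ^ 2 := by
    have := h (v - t • u) e he
    rw [apply_sub_smul_self hB, huu] at this
    simpa [hue] using this
  have hbad := key ((B v v - ((B v e) ^ 2 + 1) / B e e) / (2 * B v u))
  have : (B v v - 2 * ((B v v - ((B v e) ^ 2 + 1) / B e e) / (2 * B v u)) * B v u) * B e e =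
      (B v e) ^ 2 + 1 := by
    have := he.ne'
    field_simp
    ring
  linarith

end HyperbolicForms

section LocalGlobalPrinciple

variable {ι : Type*} [DecidableEq ι] {B : LinearMap.BilinForm ℝ (ι → ℝ)} {h : ι → ℝ}

theorem map_eq_sum_single [Fintype ι] (f : (ι → ℝ) →ₗ[ℝ] ℝ) (v : ι → ℝ) :
    f v = ∑ i, v i * f (Pi.single i 1) := by
  conv_lhs => rw [pi_eq_sum_univ' v]
  simp [map_sum]

theorem apply_eq_sum_single [Fintype ι] (B : LinearMap.BilinForm ℝ (ι → ℝ)) (v w : ι → ℝ) :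
    B v w = ∑ i, v i * B (Pi.single i 1) w :=
  map_eq_sum_single (B.flip w) v

theorem apply_single_nonneg [Finite ι]
    (hnonneg : ∀ i j, 0 ≤ B (Pi.single i 1) (Pi.single j 1)) (i : ι) {v : ι → ℝ}
    (hv : ∀ j, 0 ≤ v j) : 0 ≤ B (Pi.single i 1) v := by
  cases nonempty_fintype ι
  rw [map_eq_sum_single]
  exact sum_nonneg fun j _ => mul_nonneg (hv j) (hnonneg i j)

theorem single_eq_zero_of_apply_eq_zero [Finite ι]
    (hnonneg : ∀ i j, 0 ≤ B (Pi.single i 1) (Pi.single j 1))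
    (hh : ∀ i, 0 < h i) {i : ι} (hi : B (Pi.single i 1) h = 0) : B (Pi.single i 1) = 0 := by
  cases nonempty_fintype ι
  rw [map_eq_sum_single, sum_eq_zero_iff_of_nonneg
    fun j _ => mul_nonneg (hh j).le (hnonneg i j)] at hi
  ext j
  simpa [(hh j).ne'] using hi j (mem_univ j)

theorem eq_zero_of_self_eq_zero [Finite ι]
    (hnonneg : ∀ i j, 0 ≤ B (Pi.single i 1) (Pi.single j 1))
    (hh : ∀ i, 0 < h i) (hzero : B h h = 0) : B = 0 := by
  cases nonempty_fintype ι
  rw [apply_eq_sum_single, sum_eq_zero_iff_of_nonneg fun i _ =>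
    mul_nonneg (hh i).le (apply_single_nonneg hnonneg i fun j => (hh j).le)] at hzero
  have hrow (i) : B (Pi.single i 1) h = 0 :=
    (mul_eq_zero.1 (hzero i (mem_univ i))).resolve_left (hh i).ne'
  ext i j
  simp [single_eq_zero_of_apply_eq_zero hnonneg hh (hrow _)]

variable [Fintype ι]

theorem self_nonpos_of_orthogonal_eigenvectors (hB : B.IsSymm) (y : ι → ℝ)
    (hy : ∀ t, 0 < t → ∀ u : ι → ℝ, (∀ i, B (Pi.single i 1) u = t * u i) → ∑ i, y i * u i = 0) :
    B y y ≤ 0 := by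
  have hherm : (LinearMap.BilinForm.toMatrix' B).IsHermitian := by
    ext i j
    simp [LinearMap.BilinForm.toMatrix'_apply, hB.eq]
  set b := hherm.eigenvectorBasis
  have heigen (k i) : B (Pi.single i 1) (b k).ofLp = hherm.eigenvalues k * b k i := by
    have := congrFun (hherm.mulVec_eigenvectorBasis k) i
    rw [map_eq_sum_single, ← smul_eq_mul, ← Pi.smul_apply, ← this]
    exact sum_congr rfl fun j _ => mul_comm _ _
  have hcoord (k) : B y (b k).ofLp = hherm.eigenvalues k * ∑ i, y i * b k i := by
    rw [apply_eq_sum_single, mul_sum]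
    exact sum_congr rfl fun i _ => by rw [heigen]; ring
  have hexpand : y = ∑ k, (∑ i, y i * b k i) • (b k).ofLp := by
    have := congrArg WithLp.ofLp (b.sum_repr' (WithLp.toLp 2 y))
    simp only [WithLp.ofLp_sum, WithLp.ofLp_smul, EuclideanSpace.inner_eq_star_dotProduct] at this
    exact this.symm
  have hself : B y y = ∑ k, hherm.eigenvalues k * (∑ i, y i * b k i) ^ 2 := by
    conv_lhs => enter [2]; rw [hexpand]
    simp only [map_sum, map_smul, smul_eq_mul, hcoord]
    exact sum_congr rfl fun k _ => by ring
  rw [hself]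
  refine sum_nonpos fun k _ => ?_
  rcases le_or_gt (hherm.eigenvalues k) 0 with hk | hk
  · exact mul_nonpos_of_nonpos_of_nonneg hk (sq_nonneg _)
  · rw [hy _ hk _ (heigen k)]; simp

theorem self_nonpos_of_orthogonal_scaled_eigenvectors (hB : B.IsSymm) {d : ι → ℝ}
    (hd : ∀ i, d i = 0 → B (Pi.single i 1) = 0) (v : ι → ℝ)
    (hv : ∀ t, 0 < t → ∀ w : ι → ℝ, (∀ i, d i * B (Pi.single i 1) (d * w) = t * w i) →
      ∑ i, v i / d i * w i = 0) :
    B v v ≤ 0 := by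
  set scale := LinearMap.mulLeft ℝ d
  have hscale (w) : B (scale (v / d)) w = B v w := by
    rw [apply_eq_sum_single, apply_eq_sum_single B v]
    refine sum_congr rfl fun i _ => ?_
    rcases eq_or_ne (d i) 0 with hi | hi
    · simp [hd i hi]
    · simp [scale, mul_div_cancel₀ _ hi]
  have hself : B v v = B.comp scale scale (v / d) (v / d) := by
    rw [LinearMap.BilinForm.comp_apply, hscale, hB.eq _ (scale _), hscale]
  have hsymm : (B.comp scale scale).IsSymm := ⟨fun x y => hB.eq _ _⟩
  rw [hself]
  refine self_nonpos_of_orthogonal_eigenvectors hsymm _ fun t ht w hw => hv t ht w fun i => ?_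
  have hsingle : scale (Pi.single i 1) = d i • Pi.single i 1 := by
    ext j
    rcases eq_or_ne j i with rfl | hj <;> simp_all [scale]
  rw [← hw, LinearMap.BilinForm.comp_apply, hsingle, map_smul, LinearMap.smul_apply, smul_eq_mul]
  rfl

theorem dirichlet_identity (hB : B.IsSymm) (hh : ∀ i, 0 < h i) (u : ι → ℝ) :
    ∑ i, ∑ j, B (Pi.single i 1) (Pi.single j 1) * h i * h j * (u i / h i - u j / h j) ^ 2 =
      2 * (∑ i, B (Pi.single i 1) h * u i ^ 2 / h i - B u u) := by
  have hterm (i j) : B (Pi.single i 1) (Pi.single j 1) * h i * h j * (u i / h i - u j / h j) ^ 2 =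
      u i ^ 2 / h i * (h j * B (Pi.single j 1) (Pi.single i 1)) +
      u j ^ 2 / h j * (h i * B (Pi.single i 1) (Pi.single j 1)) -
        2 * (u i * (u j * B (Pi.single j 1) (Pi.single i 1))) := by
    have := (hh i).ne'
    have := (hh j).ne'
    rw [hB.eq (Pi.single j 1)]
    field_simp
    ring
  have hrow (v : ι → ℝ) (i) :
      ∑ j, v j * B (Pi.single j 1) (Pi.single i 1) = B (Pi.single i 1) v := by
    rw [← apply_eq_sum_single, hB.eq]
  have hdiag : ∑ i, ∑ j, u i ^ 2 / h i * (h j * B (Pi.single j 1) (Pi.single i 1)) =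
      ∑ i, B (Pi.single i 1) h * u i ^ 2 / h i :=
    sum_congr rfl fun i _ => by rw [← mul_sum, hrow]; ring
  have hcross : ∑ i, ∑ j, 2 * (u i * (u j * B (Pi.single j 1) (Pi.single i 1))) = 2 * B u u := by
    rw [apply_eq_sum_single B u u, mul_sum]
    exact sum_congr rfl fun i _ => by rw [← mul_sum, ← mul_sum, hrow]
  simp_rw [hterm, sum_sub_distrib, sum_add_distrib]
  rw [hcross, hdiag, sum_comm, hdiag]
  ring

theorem div_eq_div_of_eigenvector (hB : B.IsSymm)
    (hnonneg : ∀ i j, 0 ≤ B (Pi.single i 1) (Pi.single j 1)) (hh : ∀ i, 0 < h i)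
    {u : ι → ℝ} (hpull : B u u ≤ ∑ i, h i * (B (Pi.single i 1) u) ^ 2 / B (Pi.single i 1) h)
    {t : ℝ} (ht : 0 < t) (hu : ∀ i, h i * B (Pi.single i 1) u = t * (B (Pi.single i 1) h * u i))
    {i j : ι} (hij : 0 < B (Pi.single i 1) (Pi.single j 1)) : u i / h i = u j / h j := by
  set S := ∑ i, B (Pi.single i 1) h * u i ^ 2 / h i
  have happly (i) : B (Pi.single i 1) u = t * (B (Pi.single i 1) h * u i) / h i := by
    rw [← hu, mul_div_cancel_left₀ _ (hh i).ne']
  have hself : B u u = t * S := by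
    rw [apply_eq_sum_single, mul_sum]
    exact sum_congr rfl fun i _ => by rw [happly]; ring
  have hpullS : ∑ i, h i * (B (Pi.single i 1) u) ^ 2 / B (Pi.single i 1) h = t ^ 2 * S := by
    rw [mul_sum]
    refine sum_congr rfl fun i _ => ?_
    have := (hh i).ne'
    rw [happly]
    rcases eq_or_ne (B (Pi.single i 1) h) 0 with hD | hD
    · simp [hD]
    · field_simp
  have hterm (i j) :
      0 ≤ B (Pi.single i 1) (Pi.single j 1) * h i * h j * (u i / h i - u j / h j) ^ 2 :=
    mul_nonneg (mul_nonneg (mul_nonneg (hnonneg i j) (hh i).le) (hh j).le) (sq_nonneg _)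
  have hle : B u u ≥ S := by
    rw [hself]
    rw [hself, hpullS, sq, mul_assoc] at hpull
    exact le_of_mul_le_mul_left hpull ht
  have hsum := dirichlet_identity hB hh u
  have hzero : ∑ i, ∑ j, B (Pi.single i 1) (Pi.single j 1) * h i * h j *
      (u i / h i - u j / h j) ^ 2 = 0 :=
    le_antisymm (by rw [hsum]; linarith) (sum_nonneg fun i _ => sum_nonneg fun j _ => hterm i j)
  have hzero := (sum_eq_zero_iff_of_nonneg fun i _ => sum_nonneg fun j _ => hterm i j).1 hzero i
    (mem_univ i)
  have hzero := (sum_eq_zero_iff_of_nonneg fun j _ => hterm i j).1 hzero j (mem_univ j)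
  have hcoeff := mul_pos (mul_pos hij (hh i)) (hh j)
  exact sub_eq_zero.1 (pow_eq_zero_iff two_ne_zero |>.1
    ((mul_eq_zero.1 hzero).resolve_left hcoeff.ne'))

theorem exists_eq_mul_of_eigenvector (hB : B.IsSymm)
    (hnonneg : ∀ i j, 0 ≤ B (Pi.single i 1) (Pi.single j 1)) (hh : ∀ i, 0 < h i)
    {u : ι → ℝ} (hpull : B u u ≤ ∑ i, h i * (B (Pi.single i 1) u) ^ 2 / B (Pi.single i 1) h)
    (hconn : ∀ i j, 0 < B (Pi.single i 1) h → 0 < B (Pi.single j 1) h →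
      Relation.EqvGen (fun i j => 0 < B (Pi.single i 1) (Pi.single j 1)) i j)
    {t : ℝ} (ht : 0 < t)
    (hu : ∀ i, h i * B (Pi.single i 1) u = t * (B (Pi.single i 1) h * u i)) :
    ∃ c, ∀ i, 0 < B (Pi.single i 1) h → u i = c * h i := by
  have hconst {i j} (hi : 0 < B (Pi.single i 1) h) (hj : 0 < B (Pi.single j 1) h) :
      u i / h i = u j / h j :=
    ((Setoid.ker fun i => u i / h i).iseqv.eqvGen_iff).1 <| (hconn i j hi hj).mono fun _ _ =>
      div_eq_div_of_eigenvector hB hnonneg hh hpull ht hu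
  by_cases hex : ∃ j, 0 < B (Pi.single j 1) h
  · obtain ⟨j, hj⟩ := hex
    exact ⟨u j / h j, fun i hi => by rw [← hconst hi hj, div_mul_cancel₀ _ (hh i).ne']⟩
  · exact ⟨0, fun i hi => (hex ⟨i, hi⟩).elim⟩

/-- The local–global principle: the pullback inequality `hpull` forces every positive eigenvalue of
`B`, measured against the diagonal form `∑ i, (B eᵢ h / hᵢ) vᵢ²`, to be at least `1`, and
connectivity makes `h` the only eigenvector with such an eigenvalue. -/
theorem isHyperbolic_of_pullback (hB : B.IsSymm)
    (hnonneg : ∀ i j, 0 ≤ B (Pi.single i 1) (Pi.single j 1)) (hh : ∀ i, 0 < h i)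
    (hpull : ∀ v, B v v ≤ ∑ i, h i * (B (Pi.single i 1) v) ^ 2 / B (Pi.single i 1) h)
    (hconn : ∀ i j, 0 < B (Pi.single i 1) h → 0 < B (Pi.single j 1) h →
      Relation.EqvGen (fun i j => 0 < B (Pi.single i 1) (Pi.single j 1)) i j) :
    IsHyperbolic B := by
  refine isHyperbolic_of_nonpos_on_ker hB (B.flip h) fun v hv => ?_
  set D : ι → ℝ := fun i => B (Pi.single i 1) h
  have hD (i) : 0 ≤ D i := apply_single_nonneg hnonneg i fun j => (hh j).le
  have hrow {i} (hi : D i = 0) : B (Pi.single i 1) = 0 :=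
    single_eq_zero_of_apply_eq_zero hnonneg hh hi
  -- `D i = 0` gives `h i / D i = 0`, so the rescaling kills the coordinates with vanishing row.
  set d : ι → ℝ := fun i => √(h i / D i)
  have hd (i) : d i ^ 2 = h i / D i := Real.sq_sqrt (div_nonneg (hh i).le (hD i))
  have hd0 {i} (hi : D i ≠ 0) : d i ≠ 0 :=
    (Real.sqrt_pos.2 (div_pos (hh i) ((hD i).lt_of_ne' hi))).ne'
  refine self_nonpos_of_orthogonal_scaled_eigenvectors hB
    (fun i hi => hrow (by_contra fun hDi => hd0 hDi hi)) v fun t ht w hw => ?_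
  set u := d * w
  have hu (i) : h i * B (Pi.single i 1) u = t * (D i * u i) := by
    rcases eq_or_ne (D i) 0 with hi | hi
    · simp [hrow hi, hi]
    · have hhi : h i = D i * d i ^ 2 := by rw [hd, mul_div_cancel₀ _ hi]
      calc h i * B (Pi.single i 1) u = D i * d i * (d i * B (Pi.single i 1) u) := by rw [hhi]; ring
        _ = t * (D i * (d i * w i)) := by rw [hw]; ring
  obtain ⟨c, hc⟩ := exists_eq_mul_of_eigenvector hB hnonneg hh (hpull u) hconn ht hu
  have hterm (i) : v i / d i * w i = c * (v i * D i) := by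
    rcases eq_or_ne (D i) 0 with hi | hi
    · simp [d, hi]
    · have hdi := hd0 hi
      have hhi := (hh i).ne'
      calc v i / d i * w i = v i * (d i * w i) / d i ^ 2 := by field_simp
        _ = v i * (c * h i) / (h i / D i) := by rw [← hc i ((hD i).lt_of_ne' hi), hd]; rfl
        _ = c * (v i * D i) := by field_simp
  have hv : ∑ i, v i * D i = 0 := by rwa [← apply_eq_sum_single]
  rw [sum_congr rfl fun i _ => hterm i, ← mul_sum, hv, mul_zero]

end LocalGlobalPrinciple

section Peelings

variable {α : Type*}

/-- The strict order of `α` (`c = true`) or its dual (`c = false`), so that arguments about the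
elements below and above a given one need only be made once. -/
def sideLT [LT α] : Bool → α → α → Prop
  | true, x, y => x < y
  | false, x, y => y < x

section Preorder

variable [Preorder α] {c d : Bool} {x y u : α}

theorem sideLT_irrefl (c : Bool) (x : α) : ¬sideLT c x x := by
  cases c <;> exact lt_irrefl x

theorem sideLT.trans (hxy : sideLT c x y) (hyu : sideLT c y u) : sideLT c x u := by
  cases c
  · exact lt_trans (a := u) hyu hxy
  · exact lt_trans (a := x) hxy hyu

theorem sideLT.asymm (hxy : sideLT c x y) : ¬sideLT c y x :=
  fun hyx => sideLT_irrefl c x (hxy.trans hyx)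

theorem sideLT_not : sideLT (!c) x y ↔ sideLT c y x := by
  cases c <;> rfl

theorem sideLT_of_ne (h : d ≠ c) : sideLT d x y ↔ sideLT c y x := by
  rw [Bool.eq_not.2 h, sideLT_not]

theorem exists_not_sideLT (x y : α) : ∃ c, ¬sideLT c x y := by
  by_contra! h
  exact (h true).asymm (h false)

instance (c : Bool) : IsStrictOrder α (sideLT c) where
  irrefl := sideLT_irrefl c
  trans _ _ _ := sideLT.trans

/-- The number of elements of `Y` below (`c = true`) or above (`c = false`) the element `z`. -/
def sideCard (z : α) (c : Bool) (Y : Finset α) : ℕ :=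
  #{y ∈ Y | sideLT c y z}

theorem sideCard_mono {z : α} {Y Y' : Finset α} (h : Y ⊆ Y') : sideCard z c Y ≤ sideCard z c Y' :=
  card_le_card (filter_subset_filter _ h)

theorem sideCard_add_sideCard_not_lt {z : α} {Y : Finset α} (hz : z ∈ Y) (c : Bool) :
    sideCard z c Y + sideCard z (!c) Y < #Y := by
  classical
  have hdisj : Disjoint {y ∈ Y | sideLT c y z} {y ∈ Y | sideLT (!c) y z} :=
    disjoint_filter.2 fun y _ h h' => h.asymm (sideLT_not.1 h')
  rw [sideCard, sideCard, ← card_union_of_disjoint hdisj]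
  refine card_lt_card (ssubset_iff_of_subset ?_ |>.2 ⟨z, hz, ?_⟩)
  · exact union_subset (filter_subset _ _) (filter_subset _ _)
  · simp [sideLT_irrefl]

end Preorder

/-- The elements of `Y` other than `z` that are minimal (`c = true`) or maximal (`c = false`) in
`Y`; these are the elements a peeling of `Y` may remove next on side `c`. -/
def extremal [LT α] [DecidableEq α] (z : α) (c : Bool) (Y : Finset α) : Finset α :=
  Y.filter fun x => x ≠ z ∧ ∀ y ∈ Y, ¬sideLT c y x

/-- The extremal elements of `Y`, each tagged with the side on which it is extremal. They are the
coordinates on which the forms attached to `Y` depend. -/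
def active [LT α] [DecidableEq α] (z : α) (Y : Finset α) : Finset (Bool × α) :=
  ((univ : Finset Bool) ×ˢ Y).filter fun i => i.2 ∈ extremal z i.1 Y

/-- The weighted number of ways to peel `Y` along the word `s`, i.e. to remove one after another an
element extremal on the side given by the next letter, where removing `x` on side `c` costs a
factor `W (c, x)`. -/
def peelWeight [LT α] [DecidableEq α] (W : Bool × α → ℝ) (z : α) : List Bool → Finset α → ℝ
  | [], _ => 1
  | c :: s, Y => ∑ x ∈ extremal z c Y, W (c, x) * peelWeight W z s (Y.erase x)

/-- The restriction of a vector to the facet `i` of `Y`: coordinates that become active only after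
the removal of `i.2` inherit the value at `i`. -/
def faceMap [LT α] [DecidableEq α] (z : α) (Y : Finset α) (i : Bool × α) :
    (Bool × α → ℝ) →ₗ[ℝ] (Bool × α → ℝ) :=
  LinearMap.pi fun j => LinearMap.proj (if j ∈ active z Y then j else i)

/-- The linear form of the word `s`; it plays the role of a mixed volume `V(·, …)`. -/
def peelForm [LT α] [DecidableEq α] (W : Bool × α → ℝ) (z : α) (s : List Bool) (Y : Finset α) :
    (Bool × α → ℝ) →ₗ[ℝ] ℝ :=
  ∑ i ∈ active z Y, (W i * peelWeight W z s (Y.erase i.2)) • LinearMap.proj i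

/-- The bilinear form of the word `s`; it plays the role of a mixed volume `V(·, ·, …)`. -/
def peelBilin [LT α] [DecidableEq α] (W : Bool × α → ℝ) (z : α) (s : List Bool) (Y : Finset α) :
    LinearMap.BilinForm ℝ (Bool × α → ℝ) :=
  ∑ i ∈ active z Y, (LinearMap.proj i).smulRight
    (W i • peelForm W z s (Y.erase i.2) ∘ₗ faceMap z Y i)

/-- The vector taking the value `g c` on all coordinates of side `c`. -/
def sideVec (g : Bool → ℝ) : Bool × α → ℝ := fun i => g i.1

variable [Preorder α] [DecidableEq α] {W : Bool × α → ℝ} {z x y : α} {c d : Bool} {s : List Bool}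
  {Y : Finset α} {i j : Bool × α}

theorem mem_extremal : x ∈ extremal z c Y ↔ x ∈ Y ∧ x ≠ z ∧ ∀ y ∈ Y, ¬sideLT c y x := by
  simp [extremal]

theorem mem_active : i ∈ active z Y ↔ i.2 ∈ extremal z i.1 Y := by
  simp +contextual [active, mem_extremal]

theorem extremal_subset : extremal z c Y ⊆ Y :=
  filter_subset _ _

theorem ne_of_mem_extremal (hx : x ∈ extremal z c Y) : x ≠ z :=
  (mem_extremal.1 hx).2.1

theorem mem_extremal_erase (hy : y ∈ extremal z c Y) (hyx : y ≠ x) :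
    y ∈ extremal z c (Y.erase x) := by
  rw [mem_extremal] at hy ⊢
  exact ⟨mem_erase.2 ⟨hyx, hy.1⟩, hy.2.1, fun u hu => hy.2.2 u (mem_of_mem_erase hu)⟩

theorem mem_extremal_iff_of_mem_erase (hx : x ∈ Y) (hy : y ∈ extremal z c (Y.erase x)) :
    y ∈ extremal z c Y ↔ ¬sideLT c x y := by
  refine ⟨fun h => (mem_extremal.1 h).2.2 x hx, fun h => ?_⟩
  rw [mem_extremal] at hy ⊢
  refine ⟨mem_of_mem_erase hy.1, hy.2.1, fun u hu => ?_⟩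
  rcases eq_or_ne u x with rfl | hux
  · exact h
  · exact hy.2.2 u (mem_erase.2 ⟨hux, hu⟩)

theorem sideLT_of_mem_active_erase (hi : i ∈ active z Y)
    (hj : j ∈ active z (Y.erase i.2)) (hnew : j ∉ active z Y) : j.1 = i.1 ∧ sideLT i.1 i.2 j.2 := by
  rw [mem_active] at hi hj hnew
  have hlt := not_not.1 fun h => hnew
    ((mem_extremal_iff_of_mem_erase (extremal_subset hi) hj).2 h)
  have hside : j.1 = i.1 := by
    by_contra hne
    rw [sideLT_of_ne hne] at hlt
    exact (mem_extremal.1 hi).2.2 _ (mem_of_mem_erase (extremal_subset hj)) hlt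
  exact ⟨hside, hside ▸ hlt⟩

theorem sum_active (F : Bool × α → ℝ) :
    ∑ i ∈ active z Y, F i = ∑ c, ∑ x ∈ extremal z c Y, F (c, x) := by
  rw [active, sum_filter, sum_product]
  refine sum_congr rfl fun c _ => ?_
  rw [← sum_filter]
  exact sum_congr (filter_mem_eq_inter.trans (inter_eq_right.2 extremal_subset)) fun _ _ => rfl

theorem sum_active_filter (c : Bool) (F : Bool × α → ℝ) :
    ∑ i ∈ active z Y with i.1 = c, F i = ∑ x ∈ extremal z c Y, F (c, x) := by
  rw [sum_filter, sum_active]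
  cases c <;> simp

theorem sum_active_erase (x : α) (F : Bool × α → ℝ) :
    ∑ j ∈ active z (Y.erase x), F j =
      (∑ j ∈ active z Y with j.2 ≠ x, F j) + ∑ j ∈ active z (Y.erase x) \ active z Y, F j := by
  rw [← sum_inter_add_sum_sdiff _ (active z Y)]
  congr 2
  ext j
  simp only [mem_inter, mem_filter, mem_active]
  refine ⟨fun h => ⟨h.2, (mem_erase.1 (extremal_subset h.1)).1⟩, fun h => ⟨?_, h.1⟩⟩
  exact mem_extremal_erase h.1 h.2

theorem faceMap_apply (v : Bool × α → ℝ) :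
    faceMap z Y i v j = if j ∈ active z Y then v j else v i := by
  simp only [faceMap, LinearMap.pi_apply, LinearMap.proj_apply]
  split_ifs <;> rfl

theorem peelForm_apply (v : Bool × α → ℝ) :
    peelForm W z s Y v = ∑ i ∈ active z Y, W i * peelWeight W z s (Y.erase i.2) * v i := by
  simp [peelForm, LinearMap.sum_apply]

theorem peelBilin_apply (v w : Bool × α → ℝ) :
    peelBilin W z s Y v w = ∑ i ∈ active z Y,
      v i * (W i * peelForm W z s (Y.erase i.2) (faceMap z Y i w)) := by
  simp [peelBilin, LinearMap.sum_apply]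

theorem peelForm_congr {v w : Bool × α → ℝ} (h : ∀ i ∈ active z Y, v i = w i) :
    peelForm W z s Y v = peelForm W z s Y w := by
  simp only [peelForm_apply]
  exact sum_congr rfl fun i hi => by rw [h i hi]

theorem peelBilin_congr_left {v w : Bool × α → ℝ} (h : ∀ i ∈ active z Y, v i = w i) :
    peelBilin W z s Y v = peelBilin W z s Y w := by
  ext u
  simp only [peelBilin_apply]
  exact sum_congr rfl fun i hi => by rw [h i hi]

theorem faceMap_sideVec (hi : i ∈ active z Y) (g : Bool → ℝ) (hj : j ∈ active z (Y.erase i.2)) :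
    faceMap z Y i (sideVec g) j = sideVec g j := by
  rw [faceMap_apply]
  split_ifs with h
  · rfl
  · rw [sideVec, sideVec, (sideLT_of_mem_active_erase hi hj h).1]

theorem peelForm_sideVec (g : Bool → ℝ) :
    peelForm W z s Y (sideVec g) = ∑ c, g c * peelWeight W z (c :: s) Y := by
  rw [peelForm_apply, sum_active]
  refine sum_congr rfl fun c _ => ?_
  rw [peelWeight, mul_sum]
  exact sum_congr rfl fun x _ => by rw [sideVec, mul_comm]

theorem peelForm_sideVec_single (c : Bool) :
    peelForm W z s Y (sideVec (Pi.single c 1)) = peelWeight W z (c :: s) Y := by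
  simp [peelForm_sideVec, Pi.single_apply]

theorem peelForm_faceMap_sideVec (hi : i ∈ active z Y) (g : Bool → ℝ) :
    peelForm W z s (Y.erase i.2) (faceMap z Y i (sideVec g)) =
      ∑ c, g c * peelWeight W z (c :: s) (Y.erase i.2) := by
  rw [← peelForm_sideVec]
  exact peelForm_congr fun _ => faceMap_sideVec hi g

theorem peelBilin_sideVec (v : Bool × α → ℝ) (g : Bool → ℝ) :
    peelBilin W z s Y v (sideVec g) = ∑ c, g c * peelForm W z (c :: s) Y v := by
  simp only [peelBilin_apply, peelForm_apply v, mul_sum]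
  rw [sum_comm]
  refine sum_congr rfl fun i hi => ?_
  rw [peelForm_faceMap_sideVec hi, mul_sum, mul_sum]
  exact sum_congr rfl fun c _ => by ring

theorem peelBilin_sideVec_single (v : Bool × α → ℝ) (c : Bool) :
    peelBilin W z s Y v (sideVec (Pi.single c 1)) = peelForm W z (c :: s) Y v := by
  simp [peelBilin_sideVec, Pi.single_apply]

theorem peelBilin_eq_sum_add_sum (v w : Bool × α → ℝ) :
    peelBilin W z s Y v w =
      (∑ i ∈ active z Y, ∑ j ∈ active z Y, if i.2 = j.2 then 0 else
        W i * W j * peelWeight W z s ((Y.erase i.2).erase j.2) * (v i * w j)) +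
      ∑ i ∈ active z Y, ∑ j ∈ active z (Y.erase i.2) \ active z Y,
        W i * W j * peelWeight W z s ((Y.erase i.2).erase j.2) * (v i * w i) := by
  rw [peelBilin_apply, ← sum_add_distrib]
  refine sum_congr rfl fun i _ => ?_
  rw [peelForm_apply, sum_active_erase, mul_add, mul_add, sum_filter]
  simp only [mul_sum]
  congr 1 <;> refine sum_congr rfl fun j hj => ?_
  · rw [faceMap_apply, if_pos hj]
    simp only [ne_eq, ite_not, eq_comm (a := j.2)]
    split_ifs <;> ring
  · rw [faceMap_apply, if_neg (mem_sdiff.1 hj).2]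
    ring

theorem peelBilin_isSymm (W : Bool × α → ℝ) (z : α) (s : List Bool) (Y : Finset α) :
    (peelBilin W z s Y).IsSymm := by
  refine ⟨fun v w => ?_⟩
  rw [peelBilin_eq_sum_add_sum, peelBilin_eq_sum_add_sum, sum_comm]
  congr 1 <;> refine sum_congr rfl fun i _ => sum_congr rfl fun j _ => ?_
  · simp only [eq_comm (a := j.2), erase_right_comm (a := j.2)]
    split_ifs <;> ring
  · ring

theorem peelBilin_faceMap_sideVec (hi : i ∈ active z Y) (g : Bool → ℝ) :
    peelBilin W z s (Y.erase i.2) (faceMap z Y i (sideVec g)) (faceMap z Y i (sideVec g)) =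
      peelBilin W z s (Y.erase i.2) (sideVec g) (sideVec g) := by
  have hleft := peelBilin_congr_left (W := W) (s := s) fun j => faceMap_sideVec (j := j) hi g
  rw [hleft, ← (peelBilin_isSymm W z s _).eq, hleft]

theorem peelForm_cons (d : Bool) (s : List Bool) (Y : Finset α) (v : Bool × α → ℝ) :
    peelForm W z (d :: s) Y v = ∑ i ∈ active z Y with i.1 = d,
      W i * peelForm W z s (Y.erase i.2) (faceMap z Y i v) := by
  rw [← peelBilin_sideVec_single, (peelBilin_isSymm W z s Y).eq, peelBilin_apply, sum_filter]
  simp [sideVec, Pi.single_apply]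

theorem peelWeight_swap (a b : Bool) (s : List Bool) (Y : Finset α) :
    peelWeight W z (a :: b :: s) Y = peelWeight W z (b :: a :: s) Y := by
  rw [← peelForm_sideVec_single, ← peelForm_sideVec_single, ← peelBilin_sideVec_single,
    ← peelBilin_sideVec_single, (peelBilin_isSymm W z s Y).eq]

theorem peelWeight_nonneg (hW : ∀ i, 0 ≤ W i) (s : List Bool) (Y : Finset α) :
    0 ≤ peelWeight W z s Y := by
  induction s generalizing Y with
  | nil => exact zero_le_one
  | cons c s ih => exact sum_nonneg fun x _ => mul_nonneg (hW _) (ih _)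

theorem peelForm_nonneg (hW : ∀ i, 0 ≤ W i) {v : Bool × α → ℝ} (hv : ∀ i, 0 ≤ v i) :
    0 ≤ peelForm W z s Y v := by
  rw [peelForm_apply]
  exact sum_nonneg fun i _ => mul_nonneg (mul_nonneg (hW i) (peelWeight_nonneg hW _ _)) (hv i)

theorem faceMap_nonneg {v : Bool × α → ℝ} (hv : ∀ i, 0 ≤ v i) (j : Bool × α) :
    0 ≤ faceMap z Y i v j := by
  rw [faceMap_apply]
  split_ifs <;> exact hv _

theorem peelBilin_nonneg (hW : ∀ i, 0 ≤ W i) {v w : Bool × α → ℝ} (hv : ∀ i, 0 ≤ v i)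
    (hw : ∀ i, 0 ≤ w i) : 0 ≤ peelBilin W z s Y v w := by
  rw [peelBilin_apply]
  exact sum_nonneg fun i _ =>
    mul_nonneg (hv i) (mul_nonneg (hW i) (peelForm_nonneg hW (faceMap_nonneg hw)))

section Pullback

theorem faceMap_comm_sub {k : Bool × α} (hi : i ∈ active z Y) (hk : k ∈ active z Y)
    (hik : i.2 ≠ k.2) (hj : j ∈ active z ((Y.erase i.2).erase k.2)) (v : Bool × α → ℝ) :
    faceMap z (Y.erase k.2) i (faceMap z Y k v) j - faceMap z (Y.erase i.2) k (faceMap z Y i v) j =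
      if sideLT j.1 i.2 j.2 ∧ sideLT j.1 k.2 j.2 then v i - v k else 0 := by
  have hiY : i.2 ∈ Y := extremal_subset (mem_active.1 hi)
  have hkY : k.2 ∈ Y := extremal_subset (mem_active.1 hk)
  have hj_erase_i : j ∈ active z (Y.erase i.2) ↔ ¬sideLT j.1 k.2 j.2 := by
    rw [mem_active] at hj ⊢
    exact mem_extremal_iff_of_mem_erase (mem_erase.2 ⟨hik.symm, hkY⟩) hj
  have hj_erase_k : j ∈ active z (Y.erase k.2) ↔ ¬sideLT j.1 i.2 j.2 := by
    rw [erase_right_comm] at hj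
    rw [mem_active] at hj ⊢
    exact mem_extremal_iff_of_mem_erase (mem_erase.2 ⟨hik, hiY⟩) hj
  have hjY : j ∈ active z Y ↔ ¬sideLT j.1 i.2 j.2 ∧ ¬sideLT j.1 k.2 j.2 := by
    rw [← hj_erase_i]
    refine ⟨fun h => ?_, fun h => ?_⟩
    · exact ⟨(mem_extremal.1 (mem_active.1 h)).2.2 _ hiY,
        hj_erase_i.2 ((mem_extremal.1 (mem_active.1 h)).2.2 _ hkY)⟩
    · exact mem_active.2 ((mem_extremal_iff_of_mem_erase hiY (mem_active.1 h.2)).2 h.1)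
  simp only [faceMap_apply, hj_erase_i, hj_erase_k, hjY, hi, hk, if_true]
  by_cases hij : sideLT j.1 i.2 j.2 <;> by_cases hkj : sideLT j.1 k.2 j.2 <;> simp [hij, hkj]

/-- The summand of the forms of `Y` belonging to the codimension-two face obtained by removing first
`i` and then `k`. -/
def faceForm (W : Bool × α → ℝ) (z : α) (s : List Bool) (Y : Finset α) (v : Bool × α → ℝ)
    (i k : Bool × α) : ℝ :=
  W i * W k * peelForm W z s ((Y.erase i.2).erase k.2)
    (faceMap z (Y.erase i.2) k (faceMap z Y i v))

/-- The total weight of the coordinates that become active only after the removal of both `i` and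
`k`; it measures the failure of `faceForm` to be symmetric. -/
def faceKernel (W : Bool × α → ℝ) (z : α) (s : List Bool) (Y : Finset α) (i k : Bool × α) : ℝ :=
  ∑ j ∈ active z ((Y.erase i.2).erase k.2) with sideLT j.1 i.2 j.2 ∧ sideLT j.1 k.2 j.2,
    W j * peelWeight W z s (((Y.erase i.2).erase k.2).erase j.2)

theorem faceKernel_comm (i k : Bool × α) : faceKernel W z s Y i k = faceKernel W z s Y k i := by
  simp only [faceKernel, erase_right_comm (a := i.2) (b := k.2), and_comm]

theorem faceKernel_nonneg (hW : ∀ i, 0 ≤ W i) (i k : Bool × α) : 0 ≤ faceKernel W z s Y i k :=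
  sum_nonneg fun j _ => mul_nonneg (hW j) (peelWeight_nonneg hW _ _)

theorem faceKernel_eq_zero {k : Bool × α} (hi : i ∈ active z Y) (hk : k ∈ active z Y)
    (hik : i.1 ≠ k.1) : faceKernel W z s Y i k = 0 := by
  refine sum_eq_zero fun j hj => ?_
  obtain ⟨hj, hij, hkj⟩ := mem_filter.1 hj
  have hjY := mem_of_mem_erase (mem_of_mem_erase (extremal_subset (mem_active.1 hj)))
  have hside {l : Bool × α} (hl : l ∈ active z Y) (hlj : sideLT j.1 l.2 j.2) : l.1 = j.1 := by
    by_contra hne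
    exact (mem_extremal.1 (mem_active.1 hl)).2.2 _ hjY ((sideLT_of_ne hne).2 hlj)
  exact absurd ((hside hi hij).trans (hside hk hkj).symm) hik

theorem faceForm_sub {k : Bool × α} (hi : i ∈ active z Y) (hk : k ∈ active z Y)
    (hik : i.2 ≠ k.2) (v : Bool × α → ℝ) :
    faceForm W z s Y v k i - faceForm W z s Y v i k =
      W i * W k * faceKernel W z s Y i k * (v i - v k) := by
  rw [faceForm, faceForm, erase_right_comm, mul_comm (W k), ← mul_sub, ← map_sub, peelForm_apply,
    mul_assoc (W i * W k), faceKernel, sum_mul, sum_filter]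
  congr 1
  refine sum_congr rfl fun j hj => ?_
  rw [Pi.sub_apply, faceMap_comm_sub hi hk hik hj]
  split_ifs <;> ring

theorem peelBilin_cons_eq (d : Bool) (s : List Bool) (Y : Finset α) (v : Bool × α → ℝ) :
    peelBilin W z (d :: s) Y v v =
      (∑ i ∈ active z Y, ∑ k ∈ active z Y,
        if k.2 ≠ i.2 ∧ k.1 = d then v i * faceForm W z s Y v i k else 0) +
      ∑ i ∈ active z Y, ∑ j ∈ active z (Y.erase i.2) \ active z Y,
        if i.1 = d then v i * faceForm W z s Y v i j else 0 := by
  rw [peelBilin_apply, ← sum_add_distrib]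
  refine sum_congr rfl fun i hi => ?_
  rw [peelForm_cons, sum_filter, sum_active_erase, sum_filter, mul_add, mul_add]
  simp only [mul_sum]
  congr 1 <;> refine sum_congr rfl fun j hj => ?_
  · simp only [ite_and, faceForm]
    split_ifs <;> ring
  · have hj := mem_sdiff.1 hj
    rw [(sideLT_of_mem_active_erase hi hj.1 hj.2).1, faceForm]
    split_ifs <;> ring

theorem sum_peelBilin_faceMap_eq (d : Bool) (s : List Bool) (Y : Finset α) (v : Bool × α → ℝ) :
    ∑ i ∈ active z Y with i.1 = d,
        W i * peelBilin W z s (Y.erase i.2) (faceMap z Y i v) (faceMap z Y i v) =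
      (∑ i ∈ active z Y, ∑ k ∈ active z Y,
        if k.2 ≠ i.2 ∧ k.1 = d then v i * faceForm W z s Y v k i else 0) +
      ∑ i ∈ active z Y, ∑ j ∈ active z (Y.erase i.2) \ active z Y,
        if i.1 = d then v i * faceForm W z s Y v i j else 0 := by
  rw [sum_comm, ← sum_add_distrib, sum_filter]
  refine sum_congr rfl fun i _ => ?_
  by_cases hi : i.1 = d
  · rw [if_pos hi, peelBilin_apply, sum_active_erase, mul_add, sum_filter]
    simp only [mul_sum]
    congr 1 <;> refine sum_congr rfl fun j hj => ?_
    · rw [faceMap_apply, if_pos hj]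
      simp only [hi, and_true, ne_comm (a := i.2), faceForm]
      split_ifs <;> ring
    · rw [faceMap_apply, if_neg (mem_sdiff.1 hj).2, if_pos hi, faceForm]
      ring
  · simp [hi]

theorem sum_sum_mul_mul_sub_nonneg {ι : Type*} (S : Finset ι) {M : ι → ι → ℝ} (v : ι → ℝ)
    (hsymm : ∀ i ∈ S, ∀ j ∈ S, M i j = M j i) (hM : ∀ i ∈ S, ∀ j ∈ S, 0 ≤ M i j) :
    0 ≤ ∑ i ∈ S, ∑ j ∈ S, M i j * (v i * (v i - v j)) := by
  set Q := ∑ i ∈ S, ∑ j ∈ S, M i j * (v i * (v i - v j)) with hQ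
  have hQQ : Q + Q = ∑ i ∈ S, ∑ j ∈ S, M i j * (v i - v j) ^ 2 := by
    conv_lhs => rw [hQ]; arg 2; rw [sum_comm]
    rw [← sum_add_distrib]
    refine sum_congr rfl fun i hi => ?_
    rw [← sum_add_distrib]
    exact sum_congr rfl fun j hj => by rw [hsymm j hj i hi]; ring
  have : 0 ≤ Q + Q := hQQ ▸ sum_nonneg fun i hi => sum_nonneg fun j hj =>
    mul_nonneg (hM i hi j hj) (sq_nonneg _)
  linarith

theorem peelBilin_cons_le (hW : ∀ i, 0 ≤ W i) (d : Bool) (s : List Bool) (Y : Finset α)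
    (v : Bool × α → ℝ) :
    peelBilin W z (d :: s) Y v v ≤ ∑ i ∈ active z Y with i.1 = d,
      W i * peelBilin W z s (Y.erase i.2) (faceMap z Y i v) (faceMap z Y i v) := by
  set M : Bool × α → Bool × α → ℝ := fun i k =>
    if k.2 ≠ i.2 ∧ k.1 = d then W i * W k * faceKernel W z s Y i k else 0
  have hsymm : ∀ i ∈ active z Y, ∀ k ∈ active z Y, M i k = M k i := by
    intro i hi k hk
    by_cases hside : i.1 = k.1
    · simp only [M, hside, ne_comm (a := i.2), faceKernel_comm i k, mul_comm (W i)]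
    · simp [M, faceKernel_eq_zero hi hk hside, faceKernel_eq_zero hk hi (Ne.symm hside)]
  have hM : ∀ i ∈ active z Y, ∀ k ∈ active z Y, 0 ≤ M i k := by
    intro i _ k _
    simp only [M]
    split_ifs
    · exact mul_nonneg (mul_nonneg (hW i) (hW k)) (faceKernel_nonneg hW i k)
    · exact le_rfl
  have hdiff : ∀ i ∈ active z Y, ∀ k ∈ active z Y,
      M i k * (v i * (v i - v k)) =
        (if k.2 ≠ i.2 ∧ k.1 = d then v i * faceForm W z s Y v k i else 0) -
        if k.2 ≠ i.2 ∧ k.1 = d then v i * faceForm W z s Y v i k else 0 := by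
    intro i hi k hk
    simp only [M]
    split_ifs with h
    · rw [← mul_sub, faceForm_sub hi hk h.1.symm]
      ring
    · simp
  have hnonneg := sum_sum_mul_mul_sub_nonneg _ v hsymm hM
  rw [sum_congr rfl fun i hi => sum_congr rfl (hdiff i hi)] at hnonneg
  simp only [sum_sub_distrib] at hnonneg
  rw [peelBilin_cons_eq, sum_peelBilin_faceMap_eq]
  linarith

end Pullback

section Support

theorem exists_mem_extremal (hx : x ∈ Y) (hxz : x ≠ z) (hzx : ¬sideLT c z x) :
    ∃ u ∈ extremal z c Y, u = x ∨ sideLT c u x := by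
  have hwf : (Y : Set α).WellFoundedOn (sideLT c) := Y.finite_toSet.wellFoundedOn
  refine hwf.induction (P := fun x => x ≠ z → ¬sideLT c z x →
    ∃ u ∈ extremal z c Y, u = x ∨ sideLT c u x) hx (fun x hx ih hxz hzx => ?_) hxz hzx
  by_cases hmin : ∀ y ∈ Y, ¬sideLT c y x
  · exact ⟨x, mem_extremal.2 ⟨hx, hxz, hmin⟩, Or.inl rfl⟩
  · push Not at hmin
    obtain ⟨y, hy, hyx⟩ := hmin
    obtain ⟨u, hu, huy⟩ := ih y hy hyx (fun h => hzx (h ▸ hyx)) fun h => hzx (h.trans hyx)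
    exact ⟨u, hu, Or.inr (huy.elim (fun h => h ▸ hyx) fun h => h.trans hyx)⟩

theorem mem_erase_of_mem_extremal (hz : z ∈ Y) (hx : x ∈ extremal z c Y) : z ∈ Y.erase x :=
  mem_erase.2 ⟨(ne_of_mem_extremal hx).symm, hz⟩

theorem card_erase_of_mem_extremal (hx : x ∈ extremal z c Y) : #(Y.erase x) + 1 = #Y :=
  card_erase_add_one (extremal_subset hx)

theorem not_sideLT_of_mem_extremal (hz : z ∈ Y) (hx : x ∈ extremal z c Y) (hd : d ≠ c) :
    ¬sideLT d x z := by
  rw [sideLT_of_ne hd]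
  exact (mem_extremal.1 hx).2.2 z hz

theorem sideCard_erase_add_one (hx : x ∈ Y) (h : sideLT c x z) :
    sideCard z c (Y.erase x) + 1 = sideCard z c Y := by
  rw [sideCard, filter_erase, card_erase_add_one (mem_filter.2 ⟨hx, h⟩), sideCard]

theorem sideCard_erase_of_not_sideLT (h : ¬sideLT c x z) :
    sideCard z c (Y.erase x) = sideCard z c Y := by
  rw [sideCard, filter_erase, erase_eq_of_notMem (by simp [h]), sideCard]

theorem sideCard_le_erase_add_one (c : Bool) (Y : Finset α) (x : α) :
    sideCard z c Y ≤ sideCard z c (Y.erase x) + 1 := by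
  rw [sideCard, sideCard, filter_erase]
  exact Nat.sub_le_iff_le_add.1 pred_card_le_card_erase

theorem exists_mem_extremal_sideLT (h : 0 < sideCard z c Y) :
    ∃ u ∈ extremal z c Y, sideLT c u z := by
  obtain ⟨x, hx⟩ := card_pos.1 h
  obtain ⟨hxY, hxz⟩ := mem_filter.1 hx
  obtain ⟨u, hu, hux⟩ := exists_mem_extremal hxY
    (fun h => sideLT_irrefl c z (by rwa [h] at hxz)) hxz.asymm
  exact ⟨u, hu, hux.elim (fun h => h ▸ hxz) fun h => h.trans hxz⟩

theorem exists_mem_extremal_sideCard_erase_le (hz : z ∈ Y) (hcard : #Y = s.length + 2)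
    (h : ∀ d, sideCard z d Y ≤ (c :: s).count d) :
    ∃ x ∈ extremal z c Y, sideCard z c (Y.erase x) ≤ s.count c := by
  have hc : sideCard z c Y ≤ s.count c + 1 := by simpa using h c
  have hnot : sideCard z (!c) Y ≤ s.count (!c) := by simpa [List.count_cons] using h (!c)
  rcases Nat.eq_zero_or_pos (sideCard z c Y) with hzero | hpos
  · obtain ⟨x, hx, hxz, hzx⟩ : ∃ x ∈ Y, x ≠ z ∧ ¬sideLT c z x := by
      by_contra! hall
      have hsub : Y.erase z ⊆ {y ∈ Y | sideLT (!c) y z} := fun y hy =>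
        mem_filter.2 ⟨mem_of_mem_erase hy,
          sideLT_not.2 (hall y (mem_of_mem_erase hy) (ne_of_mem_erase hy))⟩
      have := card_le_card hsub
      have := card_erase_add_one hz
      have := s.count_not_add_count c
      rw [sideCard] at hnot
      omega
    obtain ⟨u, hu, -⟩ := exists_mem_extremal hx hxz hzx
    exact ⟨u, hu, (sideCard_mono (erase_subset u Y)).trans (by omega)⟩
  · obtain ⟨u, hu, huz⟩ := exists_mem_extremal_sideLT hpos
    have := sideCard_erase_add_one (extremal_subset hu) huz
    exact ⟨u, hu, by omega⟩

theorem sideCard_erase_le_count_iff (hz : z ∈ Y) (hx : x ∈ extremal z c Y) :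
    (∀ d, sideCard z d (Y.erase x) ≤ s.count d) ↔
      sideCard z c (Y.erase x) ≤ s.count c ∧ ∀ d ≠ c, sideCard z d Y ≤ (c :: s).count d := by
  have hne {d} (hd : d ≠ c) : sideCard z d (Y.erase x) ≤ s.count d ↔
      sideCard z d Y ≤ (c :: s).count d := by
    rw [sideCard_erase_of_not_sideLT (not_sideLT_of_mem_extremal hz hx hd),
      List.count_cons_of_ne hd.symm]
  refine ⟨fun h => ⟨h c, fun d hd => (hne hd).1 (h d)⟩, fun h d => ?_⟩
  rcases eq_or_ne d c with rfl | hd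
  · exact h.1
  · exact (hne hd).2 (h.2 d hd)

theorem peelWeight_cons_pos_iff (hW : ∀ i, 0 < W i) :
    0 < peelWeight W z (c :: s) Y ↔ ∃ x ∈ extremal z c Y, 0 < peelWeight W z s (Y.erase x) := by
  have hnonneg := peelWeight_nonneg (z := z) (fun i => (hW i).le) s
  rw [peelWeight, sum_pos_iff_of_nonneg fun x _ => mul_nonneg (hW _).le (hnonneg _)]
  simp only [mul_pos_iff_of_pos_left (hW _)]

theorem peelWeight_pos_iff (hW : ∀ i, 0 < W i) (s : List Bool) (hz : z ∈ Y)
    (hcard : #Y = s.length + 1) :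
    0 < peelWeight W z s Y ↔ ∀ d, sideCard z d Y ≤ s.count d := by
  induction s generalizing Y with
  | nil =>
    simp only [peelWeight, zero_lt_one, true_iff]
    intro d
    have := sideCard_add_sideCard_not_lt hz d
    simp only [List.length_nil] at hcard
    omega
  | cons c s ih =>
    have ih' (x) (hx : x ∈ extremal z c Y) : 0 < peelWeight W z s (Y.erase x) ↔
        sideCard z c (Y.erase x) ≤ s.count c ∧ ∀ d ≠ c, sideCard z d Y ≤ (c :: s).count d := by
      rw [← sideCard_erase_le_count_iff hz hx]
      refine ih (mem_erase_of_mem_extremal hz hx) ?_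
      have := card_erase_of_mem_extremal hx
      rw [List.length_cons] at hcard
      omega
    rw [peelWeight_cons_pos_iff hW]
    refine ⟨fun ⟨x, hx, hpos⟩ d => ?_, fun h => ?_⟩
    · obtain ⟨hc, hne⟩ := (ih' x hx).1 hpos
      rcases eq_or_ne d c with rfl | hd
      · rw [List.count_cons_self]
        exact (sideCard_le_erase_add_one d Y x).trans (Nat.succ_le_succ hc)
      · exact hne d hd
    · obtain ⟨x, hx, hle⟩ := exists_mem_extremal_sideCard_erase_le hz hcard h
      exact ⟨x, hx, (ih' x hx).2 ⟨hle, fun d _ => h d⟩⟩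

/-- Two active coordinates are adjacent when both can be removed and the remaining set can still be
peeled along `c :: s` for some `c`. -/
structure PeelAdj (z : α) (s : List Bool) (Y : Finset α) (i j : Bool × α) : Prop where
  left_mem : i ∈ active z Y
  right_mem : j ∈ active z Y
  ne : i.2 ≠ j.2
  sideCard_le : ∀ d, sideCard z d ((Y.erase i.2).erase j.2) ≤ s.count d + 1

theorem PeelAdj.of_count_add_two_le (hz : z ∈ Y) (hcard : #Y = s.length + 4)
    (hd : s.count d + 2 ≤ sideCard z d Y) {u : α} (hu : u ∈ extremal z d Y) (huz : sideLT d u z)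
    (hi : i ∈ active z Y) (hiz : ¬sideLT d i.2 z)
    (hle : ∀ d, sideCard z d (Y.erase i.2) ≤ s.count d + 2) : PeelAdj z s Y i (d, u) := by
  have hne : i.2 ≠ u := fun h => hiz (h ▸ huz)
  refine ⟨hi, mem_active.2 hu, hne, fun d' => ?_⟩
  have := hle d
  have := sideCard_erase_of_not_sideLT (Y := Y) hiz
  have := sideCard_erase_add_one (mem_erase.2 ⟨hne.symm, extremal_subset hu⟩) huz
  have := sideCard_add_sideCard_not_lt hz d
  have := s.count_not_add_count d
  rcases eq_or_ne d' d with rfl | hd'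
  · simp only
    omega
  · rw [Bool.eq_not.2 hd']
    have : sideCard z (!d) ((Y.erase i.2).erase u) ≤ sideCard z (!d) Y :=
      sideCard_mono ((erase_subset _ _).trans (erase_subset _ _))
    simp only
    omega

theorem eqvGen_peelAdj_of_count_add_two_le (hz : z ∈ Y) (hcard : #Y = s.length + 4)
    (hd : s.count d + 2 ≤ sideCard z d Y) (hi : i ∈ active z Y) (hj : j ∈ active z Y)
    (hiz : ¬sideLT d i.2 z) (hjz : ¬sideLT d j.2 z)
    (hile : ∀ d, sideCard z d (Y.erase i.2) ≤ s.count d + 2)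
    (hjle : ∀ d, sideCard z d (Y.erase j.2) ≤ s.count d + 2) :
    Relation.EqvGen (PeelAdj z s Y) i j := by
  obtain ⟨u, hu, huz⟩ := exists_mem_extremal_sideLT (by omega : 0 < sideCard z d Y)
  exact .trans _ _ _ (.rel _ _ (.of_count_add_two_le hz hcard hd hu huz hi hiz hile))
    (.symm _ _ (.rel _ _ (.of_count_add_two_le hz hcard hd hu huz hj hjz hjle)))

theorem exists_mem_active_ne (hx : ∀ c, x ∈ extremal z c Y) (hcard : 2 < #Y) :
    ∃ i ∈ active z Y, x ≠ i.2 := by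
  obtain ⟨y, hyY, hyz, hyx⟩ : ∃ y ∈ Y, y ≠ z ∧ y ≠ x := by
    by_contra! h
    have hsub : Y ⊆ {z, x} := fun y hy => by
      rw [mem_insert, mem_singleton, or_iff_not_imp_left]
      exact h y hy
    exact absurd (card_le_card hsub) (by have := card_le_two (a := z) (b := x); omega)
  obtain ⟨c, hzy⟩ := exists_not_sideLT z y
  obtain ⟨u, hu, huy⟩ := exists_mem_extremal hyY hyz hzy
  refine ⟨(c, u), mem_active.2 hu, ?_⟩
  rintro rfl
  exact huy.elim hyx.symm fun h => (mem_extremal.1 (hx (!c))).2.2 y hyY (sideLT_not.2 h)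

theorem eqvGen_peelAdj_of_snd_eq (hz : z ∈ Y) (hcard : #Y = s.length + 4)
    (hi : i ∈ active z Y) (hj : j ∈ active z Y) (hij : i.2 = j.2)
    (hle : ∀ d, sideCard z d (Y.erase i.2) ≤ s.count d + 2) :
    Relation.EqvGen (PeelAdj z s Y) i j := by
  by_cases hside : i.1 = j.1
  · exact Prod.ext hside hij ▸ .refl i
  have hext (c) : i.2 ∈ extremal z c Y := by
    by_cases hc : c = i.1
    · exact hc ▸ mem_active.1 hi
    · rw [(Bool.eq_not.2 hc).trans (Bool.eq_not.2 (Ne.symm hside)).symm, hij]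
      exact mem_active.1 hj
  have hnlt (d) : ¬sideLT d i.2 z :=
    not_sideLT_of_mem_extremal hz (hext (!d)) (Bool.eq_not.1 rfl).symm
  by_cases hbig : ∃ d, s.count d + 2 ≤ sideCard z d Y
  · obtain ⟨d, hd⟩ := hbig
    exact eqvGen_peelAdj_of_count_add_two_le hz hcard hd hi hj (hnlt d) (hij ▸ hnlt d) hle
      (hij ▸ hle)
  · push Not at hbig
    obtain ⟨k, hk, hik⟩ := exists_mem_active_ne hext (by omega)
    have hadj {i : Bool × α} (hi : i ∈ active z Y) (hik : i.2 ≠ k.2) : PeelAdj z s Y i k :=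
      ⟨hi, hk, hik, fun d => (sideCard_mono ((erase_subset _ _).trans (erase_subset _ _))).trans
        (Nat.lt_succ_iff.1 (hbig d))⟩
    exact .trans _ _ _ (.rel _ _ (hadj hi hik)) (.symm _ _ (.rel _ _ (hadj hj (hij ▸ hik))))

theorem eqvGen_peelAdj (hz : z ∈ Y) (hcard : #Y = s.length + 4)
    (hi : i ∈ active z Y) (hj : j ∈ active z Y)
    (hile : ∀ d, sideCard z d (Y.erase i.2) ≤ s.count d + 2)
    (hjle : ∀ d, sideCard z d (Y.erase j.2) ≤ s.count d + 2) :
    Relation.EqvGen (PeelAdj z s Y) i j := by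
  by_cases hij : i.2 = j.2
  · exact eqvGen_peelAdj_of_snd_eq hz hcard hi hj hij hile
  by_cases hadj : ∀ d, sideCard z d ((Y.erase i.2).erase j.2) ≤ s.count d + 1
  · exact .rel _ _ ⟨hi, hj, hij, hadj⟩
  push Not at hadj
  obtain ⟨d, hd⟩ := hadj
  have hnlt {x y : α} (hyx : y ≠ x) (hy : y ∈ Y)
      (hle : ∀ d, sideCard z d (Y.erase x) ≤ s.count d + 2)
      (hlt : s.count d + 1 < sideCard z d ((Y.erase x).erase y)) : ¬sideLT d y z := by
    intro h
    have := sideCard_erase_add_one (mem_erase.2 ⟨hyx, hy⟩) h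
    have := hle d
    omega
  have hjz := hnlt (Ne.symm hij) (extremal_subset (mem_active.1 hj)) hile hd
  have hiz := hnlt hij (extremal_subset (mem_active.1 hi)) hjle (erase_right_comm (s := Y) ▸ hd)
  rw [sideCard_erase_of_not_sideLT hjz, sideCard_erase_of_not_sideLT hiz] at hd
  exact eqvGen_peelAdj_of_count_add_two_le hz hcard hd hi hj hiz hjz hile hjle

end Support

section Hyperbolicity

theorem peelBilin_nil_apply (v w : Bool × α → ℝ) :
    peelBilin W z [] Y v w =
      (∑ i ∈ active z Y, ∑ j ∈ active z Y, if i.2 = j.2 then 0 else W i * W j * (v i * w j)) +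
      ∑ i ∈ active z Y, W i * (∑ j ∈ active z (Y.erase i.2) \ active z Y, W j) * (v i * w i) := by
  simp only [peelBilin_eq_sum_add_sum, peelWeight, mul_one, mul_sum, sum_mul]

theorem isHyperbolic_peelBilin_nil_of_incomp (hne : x ≠ y) (hxy : ¬x < y) (hyx : ¬y < x)
    (hY : Y.erase z = {x, y}) : IsHyperbolic (peelBilin W z [] Y) := by
  have hmem {c u} (hu : u ∈ extremal z c Y) : u = x ∨ u = y := by
    simpa [hY] using mem_erase.2 ⟨ne_of_mem_extremal hu, extremal_subset hu⟩
  have hnew {i} (hi : i ∈ active z Y) : active z (Y.erase i.2) \ active z Y = ∅ := by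
    refine eq_empty_of_forall_notMem fun j hj => ?_
    obtain ⟨hj, hjY⟩ := mem_sdiff.1 hj
    obtain ⟨hjmem, hjz, -⟩ := mem_extremal.1 (mem_active.1 hj)
    have hj' : j.2 = x ∨ j.2 = y := by
      simpa [hY] using mem_erase.2 ⟨hjz, mem_of_mem_erase hjmem⟩
    have hlt := (sideLT_of_mem_active_erase hi hj hjY).2
    rcases hmem (mem_active.1 hi) with h | h <;> rcases hj' with h' | h' <;> rw [h, h'] at hlt <;>
      cases hc : i.1 <;> rw [hc] at hlt <;> simp_all [sideLT]
  set p : α → (Bool × α → ℝ) → ℝ := fun u v => ∑ i ∈ active z Y, if i.2 = u then W i * v i else 0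
  refine isHyperbolic_of_apply_eq (f := p x) (g := p y) (a := 0) (b := 1) (c := 0)
    (fun v w => ?_) (by norm_num)
  rw [peelBilin_nil_apply, zero_mul, zero_add, zero_mul, one_mul]
  congr 1
  · simp only [p, sum_mul_sum, ← sum_add_distrib]
    refine sum_congr rfl fun i hi => sum_congr rfl fun j hj => ?_
    rcases hmem (mem_active.1 hi) with h | h <;> rcases hmem (mem_active.1 hj) with h' | h' <;>
      simp only [h, h', hne, hne.symm, if_true, if_false] <;> ring
  · exact sum_eq_zero fun i hi => by simp [hnew hi]

theorem sum_new_active_le (hW : ∀ i, 0 ≤ W i) (hi : i ∈ active z Y)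
    (hY : Y.erase z ⊆ {i.2, y}) :
    ∑ j ∈ active z (Y.erase i.2) \ active z Y, W j ≤ W (i.1, y) := by
  refine (sum_le_sum_of_subset_of_nonneg (fun j hj => ?_) fun j _ _ => hW j).trans_eq
    (sum_singleton W (i.1, y))
  obtain ⟨hj, hjY⟩ := mem_sdiff.1 hj
  obtain ⟨hjmem, hjz, -⟩ := mem_extremal.1 (mem_active.1 hj)
  obtain ⟨hji, hjmem⟩ := mem_erase.1 hjmem
  have hj' : j.2 = i.2 ∨ j.2 = y := by simpa using hY (mem_erase.2 ⟨hjz, hjmem⟩)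
  exact mem_singleton.2 (Prod.ext (sideLT_of_mem_active_erase hi hj hjY).1 (hj'.resolve_left hji))

theorem active_subset_of_lt (hxy : x < y) (hY : Y.erase z = {x, y}) :
    active z Y ⊆ {(true, x), (false, y)} := by
  have hxY : x ∈ Y := mem_of_mem_erase (by rw [hY]; exact mem_insert_self _ _ : x ∈ Y.erase z)
  have hyY : y ∈ Y := mem_of_mem_erase
    (by rw [hY]; exact mem_insert_of_mem (mem_singleton_self _) : y ∈ Y.erase z)
  intro ⟨c, u⟩ hi
  obtain ⟨huY, huz, hmin⟩ := mem_extremal.1 (mem_active.1 hi)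
  have hu : u = x ∨ u = y := by simpa [hY] using mem_erase.2 ⟨huz, huY⟩
  rcases hu with rfl | rfl <;> cases c
  · exact absurd hxy (hmin y hyY)
  · simp
  · simp
  · exact absurd hxy (hmin x hxY)

theorem isHyperbolic_peelBilin_nil_of_lt (hW : ∀ i, 0 ≤ W i) (hxy : x < y)
    (hrev : W (true, y) * W (false, x) ≤ W (true, x) * W (false, y))
    (hY : Y.erase z = {x, y}) : IsHyperbolic (peelBilin W z [] Y) := by
  set A := active z Y
  set N : Bool × α → ℝ := fun i => ∑ j ∈ active z (Y.erase i.2) \ A, W j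
  have hsum (F : Bool × α → ℝ) : ∑ i ∈ A, F i =
      (if (true, x) ∈ A then F (true, x) else 0) + if (false, y) ∈ A then F (false, y) else 0 := by
    rw [← sum_pair (f := fun i => if i ∈ A then F i else 0) (by simp), sum_ite_mem,
      inter_eq_right.2 (active_subset_of_lt hxy hY)]
  have hN (i) : 0 ≤ N i := sum_nonneg fun j _ => hW j
  refine isHyperbolic_of_apply_eq (f := fun v => v (true, x)) (g := fun v => v (false, y))
    (a := if (true, x) ∈ A then W (true, x) * N (true, x) else 0)
    (b := if (true, x) ∈ A ∧ (false, y) ∈ A then W (true, x) * W (false, y) else 0)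
    (c := if (false, y) ∈ A then W (false, y) * N (false, y) else 0) (fun v w => ?_) ?_
  · rw [peelBilin_nil_apply]
    simp only [A, N, hsum, hxy.ne, hxy.ne', if_true, if_false]
    split_ifs <;> simp_all
    ring
  · by_cases h : (true, x) ∈ A ∧ (false, y) ∈ A
    swap
    · rcases not_and_or.1 h with hx | hy
      · simp [hx]
      · simp [hy]
    obtain ⟨hx, hy⟩ := h
    simp only [hx, hy, and_self, if_true]
    have hNx : N (true, x) ≤ W (true, y) := sum_new_active_le hW hx hY.subset
    have hNy : N (false, y) ≤ W (false, x) := sum_new_active_le hW hy (by rw [hY, pair_comm])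
    calc W (true, x) * N (true, x) * (W (false, y) * N (false, y))
        = W (true, x) * W (false, y) * (N (true, x) * N (false, y)) := by ring
      _ ≤ W (true, x) * W (false, y) * (W (true, y) * W (false, x)) :=
          mul_le_mul_of_nonneg_left (mul_le_mul hNx hNy (hN _) (hW _)) (mul_nonneg (hW _) (hW _))
      _ ≤ W (true, x) * W (false, y) * (W (true, x) * W (false, y)) :=
          mul_le_mul_of_nonneg_left hrev (mul_nonneg (hW _) (hW _))
      _ = (W (true, x) * W (false, y)) ^ 2 := (sq _).symm

theorem isHyperbolic_peelBilin_nil (hW : ∀ i, 0 ≤ W i)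
    (hrev : ∀ x y, x < y → W (true, y) * W (false, x) ≤ W (true, x) * W (false, y))
    (hz : z ∈ Y) (hcard : #Y = 3) : IsHyperbolic (peelBilin W z [] Y) := by
  obtain ⟨x, y, hne, hY⟩ := card_eq_two.1 (by rw [card_erase_of_mem hz, hcard] : #(Y.erase z) = 2)
  by_cases hxy : x < y
  · exact isHyperbolic_peelBilin_nil_of_lt hW hxy (hrev x y hxy) hY
  by_cases hyx : y < x
  · exact isHyperbolic_peelBilin_nil_of_lt hW hyx (hrev y x hyx) (pair_comm y x ▸ hY)
  · exact isHyperbolic_peelBilin_nil_of_incomp hne hxy hyx hY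

theorem peelBilin_single (w : Bool × α → ℝ) :
    peelBilin W z s Y (Pi.single i 1) w =
      if i ∈ active z Y then W i * peelForm W z s (Y.erase i.2) (faceMap z Y i w) else 0 := by
  simp [peelBilin_apply, Pi.single_apply]

theorem peelBilin_single_single_nonneg (hW : ∀ i, 0 ≤ W i) (i j : Bool × α) :
    0 ≤ peelBilin W z s Y (Pi.single i 1) (Pi.single j 1) := by
  have hsingle (i : Bool × α) : (0 : Bool × α → ℝ) ≤ Pi.single i 1 := Pi.single_nonneg.2 zero_le_one
  exact peelBilin_nonneg hW (hsingle i) (hsingle j)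

theorem exists_peelWeight_pos_of_peelBilin_sideVec_pos {g : Bool → ℝ} (hg : ∀ c, 0 ≤ g c)
    (h : 0 < peelBilin W z s Y (sideVec g) (sideVec g)) :
    ∃ a b, 0 < peelWeight W z (a :: b :: s) Y := by
  by_contra! hle
  refine h.not_ge ?_
  simp only [peelBilin_sideVec, peelForm_sideVec]
  exact sum_nonpos fun b _ => mul_nonpos_of_nonneg_of_nonpos (hg b) <|
    sum_nonpos fun a _ => mul_nonpos_of_nonneg_of_nonpos (hg a) (hle a b)

theorem exists_peelWeight_cons_pos (hW : ∀ i, 0 < W i) (hz : z ∈ Y) (hcard : #Y = s.length + 2)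
    (h : ∀ d, sideCard z d Y ≤ s.count d + 1) : ∃ c, 0 < peelWeight W z (c :: s) Y := by
  have hlt := sideCard_add_sideCard_not_lt hz true
  have hlen := s.count_not_add_count true
  have hpos (c) (hc : sideCard z (!c) Y ≤ s.count (!c)) : 0 < peelWeight W z (c :: s) Y := by
    rw [peelWeight_pos_iff hW _ hz (by simpa using hcard)]
    intro d
    rcases eq_or_ne d c with rfl | hd
    · simpa using h d
    · rwa [List.count_cons_of_ne hd.symm, Bool.eq_not.2 hd]
  by_cases hle : sideCard z true Y ≤ s.count true
  · exact ⟨false, hpos false hle⟩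
  · exact ⟨true, hpos true (by omega)⟩

/-- The form of a letter mixed from both sides with coefficients `g`. For positive `g` its Hessian
is irreducible, unlike that of a single letter. -/
def mixForm (W : Bool × α → ℝ) (z : α) (g : Bool → ℝ) (s : List Bool) (Y : Finset α) :
    LinearMap.BilinForm ℝ (Bool × α → ℝ) :=
  ∑ c, g c • peelBilin W z (c :: s) Y

variable {g : Bool → ℝ}

theorem mixForm_apply (v w : Bool × α → ℝ) :
    mixForm W z g s Y v w = ∑ c, g c * peelBilin W z (c :: s) Y v w := by
  simp [mixForm]

theorem mixForm_isSymm : (mixForm W z g s Y).IsSymm :=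
  ⟨fun v w => by simp only [mixForm_apply, (peelBilin_isSymm W z _ Y).eq w v]⟩

theorem mixForm_single_single_nonneg (hW : ∀ i, 0 ≤ W i) (hg : ∀ c, 0 ≤ g c) (i j : Bool × α) :
    0 ≤ mixForm W z g s Y (Pi.single i 1) (Pi.single j 1) := by
  rw [mixForm_apply]
  exact sum_nonneg fun c _ => mul_nonneg (hg c) (peelBilin_single_single_nonneg hW i j)

theorem mixForm_single (hi : i ∈ active z Y) (v : Bool × α → ℝ) :
    mixForm W z g s Y (Pi.single i 1) v =
      W i * peelBilin W z s (Y.erase i.2) (faceMap z Y i v) (sideVec g) := by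
  rw [mixForm_apply, peelBilin_sideVec, mul_sum]
  refine sum_congr rfl fun c _ => ?_
  rw [peelBilin_single, if_pos hi]
  ring

theorem mixForm_single_of_notMem (hi : i ∉ active z Y) (v : Bool × α → ℝ) :
    mixForm W z g s Y (Pi.single i 1) v = 0 := by
  simp [mixForm_apply, peelBilin_single, hi]

theorem mixForm_single_sideVec (hi : i ∈ active z Y) :
    mixForm W z g s Y (Pi.single i 1) (sideVec g) =
      W i * peelBilin W z s (Y.erase i.2) (sideVec g) (sideVec g) := by
  rw [mixForm_single hi, peelBilin_sideVec, peelBilin_sideVec]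
  simp only [peelForm_congr fun _ => faceMap_sideVec hi g]

theorem mixForm_self_le (hW : ∀ i, 0 ≤ W i) (hg : ∀ c, 0 ≤ g c) (v : Bool × α → ℝ) :
    mixForm W z g s Y v v ≤ ∑ i ∈ active z Y,
      g i.1 * (W i * peelBilin W z s (Y.erase i.2) (faceMap z Y i v) (faceMap z Y i v)) := by
  rw [mixForm_apply, ← sum_fiberwise _ Prod.fst]
  refine sum_le_sum fun c _ => ?_
  refine (mul_le_mul_of_nonneg_left (peelBilin_cons_le hW c s Y v) (hg c)).trans_eq ?_
  rw [mul_sum]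
  exact sum_congr rfl fun i hi => by rw [(mem_filter.1 hi).2]

theorem mem_active_of_mixForm_single_ne_zero {v : Bool × α → ℝ}
    (h : mixForm W z g s Y (Pi.single i 1) v ≠ 0) : i ∈ active z Y :=
  not_imp_comm.1 (fun hi => mixForm_single_of_notMem hi v) h

theorem sideCard_le_of_mixForm_single_pos (hW : ∀ i, 0 < W i) (hg : ∀ c, 0 < g c) (hz : z ∈ Y)
    (hcard : #Y = s.length + 4) (h : 0 < mixForm W z g s Y (Pi.single i 1) (sideVec g)) (d : Bool) :
    sideCard z d (Y.erase i.2) ≤ s.count d + 2 := by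
  have hi := mem_active_of_mixForm_single_ne_zero h.ne'
  rw [mixForm_single_sideVec hi] at h
  obtain ⟨a, b, hpos⟩ := exists_peelWeight_pos_of_peelBilin_sideVec_pos (fun c => (hg c).le)
    (pos_of_mul_pos_right h (hW i).le)
  have hcard' := card_erase_of_mem_extremal (mem_active.1 hi)
  rw [peelWeight_pos_iff hW _ (mem_erase_of_mem_extremal hz (mem_active.1 hi))
    (by simp only [List.length_cons]; omega)] at hpos
  have := hpos d
  simp only [List.count_cons] at this
  split_ifs at this <;> omega

theorem mixForm_single_single_pos (hW : ∀ i, 0 < W i) (hg : ∀ c, 0 < g c) (hz : z ∈ Y)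
    (hcard : #Y = s.length + 4) (h : PeelAdj z s Y i j) :
    0 < mixForm W z g s Y (Pi.single i 1) (Pi.single j 1) := by
  have hi := mem_active.1 h.left_mem
  have hj := mem_extremal_erase (mem_active.1 h.right_mem) h.ne.symm
  have hcardi := card_erase_of_mem_extremal hi
  have hcardj := card_erase_of_mem_extremal hj
  obtain ⟨c, hc⟩ := exists_peelWeight_cons_pos hW
    (mem_erase_of_mem_extremal (mem_erase_of_mem_extremal hz hi) hj) (by omega) h.sideCard_le
  have hW' (i) := (hW i).le
  have hsingle : (0 : Bool × α → ℝ) ≤ Pi.single j 1 := Pi.single_nonneg.2 zero_le_one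
  rw [mixForm_single h.left_mem, peelBilin_sideVec]
  refine mul_pos (hW i) (sum_pos' (fun c _ => mul_nonneg (hg c).le
    (peelForm_nonneg hW' (faceMap_nonneg hsingle))) ⟨c, mem_univ c, mul_pos (hg c) ?_⟩)
  rw [peelForm_apply]
  refine sum_pos' (fun k _ => mul_nonneg (mul_nonneg (hW' k) (peelWeight_nonneg hW' _ _))
    (faceMap_nonneg hsingle k)) ⟨j, mem_active.2 hj, ?_⟩
  rw [faceMap_apply, if_pos h.right_mem, Pi.single_eq_same, mul_one]
  exact mul_pos (hW j) hc

theorem mixForm_pullback [Fintype α] (hW : ∀ i, 0 < W i) (hg : ∀ c, 0 < g c)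
    (ih : ∀ i ∈ active z Y, IsHyperbolic (peelBilin W z s (Y.erase i.2))) (v : Bool × α → ℝ) :
    mixForm W z g s Y v v ≤ ∑ i, sideVec g i * (mixForm W z g s Y (Pi.single i 1) v) ^ 2 /
      mixForm W z g s Y (Pi.single i 1) (sideVec g) := by
  have hW' (i) := (hW i).le
  have hpos : ∀ i : Bool × α, 0 < sideVec g i := fun i => hg i.1
  have hnonneg : (0 : Bool × α → ℝ) ≤ sideVec g := fun i => (hpos i).le
  refine (mixForm_self_le hW' (fun c => (hg c).le) v).trans ?_
  rw [← sum_subset (subset_univ (active z Y)) fun i _ hi => by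
    rw [mixForm_single_of_notMem hi, sq, zero_mul, mul_zero, zero_div]]
  refine sum_le_sum fun i hi => ?_
  rw [mixForm_single hi, mixForm_single_sideVec hi]
  have hle : peelBilin W z s (Y.erase i.2) (faceMap z Y i v) (faceMap z Y i v) ≤
      (peelBilin W z s (Y.erase i.2) (faceMap z Y i v) (sideVec g)) ^ 2 /
        peelBilin W z s (Y.erase i.2) (sideVec g) (sideVec g) := by
    rcases (peelBilin_nonneg hW' hnonneg hnonneg).eq_or_lt with hzero | hlt
    · rw [eq_zero_of_self_eq_zero (peelBilin_single_single_nonneg hW') hpos hzero.symm]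
      simp only [LinearMap.zero_apply, div_zero, le_refl]
    · exact (ih i hi).self_le_div _ hlt
  have hscale (w q b : ℝ) (hw : w ≠ 0) : w * (q ^ 2 / b) = (w * q) ^ 2 / (w * b) := by
    rw [mul_pow, sq w, mul_assoc, mul_div_mul_left _ _ hw, mul_div_assoc]
  rw [mul_div_assoc, ← hscale _ _ _ (hW i).ne']
  exact mul_le_mul_of_nonneg_left (mul_le_mul_of_nonneg_left hle (hW' i)) (hpos i).le

theorem isHyperbolic_mixForm [Finite α] (hW : ∀ i, 0 < W i) (hg : ∀ c, 0 < g c) (hz : z ∈ Y)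
    (hcard : #Y = s.length + 4)
    (ih : ∀ i ∈ active z Y, IsHyperbolic (peelBilin W z s (Y.erase i.2))) :
    IsHyperbolic (mixForm W z g s Y) := by
  cases nonempty_fintype α
  refine isHyperbolic_of_pullback mixForm_isSymm
    (mixForm_single_single_nonneg (fun i => (hW i).le) fun c => (hg c).le) (fun i => hg i.1)
    (mixForm_pullback hW hg ih) fun i j hi hj => ?_
  refine Relation.EqvGen.mono (fun _ _ => mixForm_single_single_pos hW hg hz hcard) _ _ ?_
  exact eqvGen_peelAdj hz hcard (mem_active_of_mixForm_single_ne_zero hi.ne')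
    (mem_active_of_mixForm_single_ne_zero hj.ne')
    (sideCard_le_of_mixForm_single_pos hW hg hz hcard hi)
    (sideCard_le_of_mixForm_single_pos hW hg hz hcard hj)

theorem isHyperbolic_peelBilin [Finite α] (hW : ∀ i, 0 < W i)
    (hrev : ∀ x y, x < y → W (true, y) * W (false, x) ≤ W (true, x) * W (false, y))
    (hz : z ∈ Y) (hcard : #Y = s.length + 3) : IsHyperbolic (peelBilin W z s Y) := by
  induction s generalizing Y with
  | nil => exact isHyperbolic_peelBilin_nil (fun i => (hW i).le) hrev hz hcard
  | cons d s ih =>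
    refine isHyperbolic_of_forall_add_smul (C := peelBilin W z ((!d) :: s) Y) fun ε hε => ?_
    have hmix := isHyperbolic_mixForm (g := fun c => if c = d then 1 else ε) hW
      (fun c => by split_ifs <;> positivity) hz (by simpa using hcard) fun i hi => by
        have := card_erase_of_mem_extremal (mem_active.1 hi)
        rw [List.length_cons] at hcard
        exact ih (mem_erase_of_mem_extremal hz (mem_active.1 hi)) (by omega)
    convert hmix using 1
    cases d <;> simp [mixForm, add_comm]

end Hyperbolicity

section Degenerate

/-- The vector equal to `1` below and to `-r` above. It lies in the kernel of the form of a
degenerate state. -/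
def kerVec (r : ℝ) : Bool × α → ℝ := sideVec fun c => bif c then 1 else -r

/-- The state reached in the equality case: the form of the word `s` on `Y` has `kerVec r` in its
kernel, and the word leaves enough room for the elements of `Y` comparable to `z`. -/
structure IsDegenerate (W : Bool × α → ℝ) (z : α) (r : ℝ) (s : List Bool) (Y : Finset α) :
    Prop where
  mem : z ∈ Y
  card : #Y = s.length + 3
  sideCard_le : ∀ d, sideCard z d Y ≤ s.count d
  ker : peelBilin W z s Y (kerVec r) = 0

variable {r : ℝ}

theorem peelForm_kerVec (r : ℝ) :
    peelForm W z s Y (kerVec r) =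
      peelWeight W z (true :: s) Y - r * peelWeight W z (false :: s) Y := by
  rw [kerVec, peelForm_sideVec, Fintype.sum_bool, cond_true, cond_false]
  ring

theorem peelForm_kerVec_erase_eq_zero (hW : ∀ i, 0 < W i) (hker : peelBilin W z s Y (kerVec r) = 0)
    (hx : x ∈ extremal z c Y) : peelForm W z s (Y.erase x) (kerVec r) = 0 := by
  have hi : (c, x) ∈ active z Y := mem_active.2 hx
  have h : peelBilin W z s Y (Pi.single (c, x) 1) (kerVec r) = 0 := by
    rw [← (peelBilin_isSymm W z s Y).eq, hker]
    rfl
  rw [peelBilin_single, if_pos hi, mul_eq_zero_iff_left (hW _).ne'] at h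
  rw [← h]
  exact peelForm_congr fun j hj => (faceMap_sideVec hi _ hj).symm

theorem IsDegenerate.of_ker (hW : ∀ i, 0 < W i) (hr : 0 < r) (hz : z ∈ Y)
    (hcard : #Y = s.length + 3) (hker : peelBilin W z s Y (kerVec r) = 0) {a b : Bool}
    (hpos : 0 < peelWeight W z (a :: b :: s) Y) : IsDegenerate W z r s Y := by
  have hratio (c) : peelWeight W z (true :: c :: s) Y = r * peelWeight W z (false :: c :: s) Y := by
    rw [← sub_eq_zero, ← peelForm_kerVec, ← peelBilin_sideVec_single, hker, LinearMap.zero_apply]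
  have hiff (a b c : Bool) :
      0 < peelWeight W z (a :: c :: s) Y ↔ 0 < peelWeight W z (b :: c :: s) Y := by
    cases a <;> cases b <;> simp only [hratio, mul_pos_iff_of_pos_left hr]
  refine ⟨hz, hcard, fun d => ?_, hker⟩
  have hnot : 0 < peelWeight W z ((!d) :: (!d) :: s) Y := by
    rwa [hiff _ b, peelWeight_swap, hiff _ a]
  rw [peelWeight_pos_iff hW _ hz (by simpa using hcard)] at hnot
  simpa [List.count_cons] using hnot d

theorem IsDegenerate.of_ratio [Finite α] (hW : ∀ i, 0 < W i)
    (hrev : ∀ x y, x < y → W (true, y) * W (false, x) ≤ W (true, x) * W (false, y)) (hr : 0 < r)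
    (hz : z ∈ Y) (hcard : #Y = s.length + 3)
    (hratio : ∀ c, peelWeight W z (true :: c :: s) Y = r * peelWeight W z (false :: c :: s) Y)
    (hpos : 0 < peelWeight W z (true :: true :: s) Y) : IsDegenerate W z r s Y := by
  have horth (c) : peelForm W z (c :: s) Y (kerVec r) = 0 := by
    rw [peelForm_kerVec, hratio, sub_self]
  refine .of_ker hW hr hz hcard ((isHyperbolic_peelBilin hW hrev hz hcard).eq_zero
    (peelBilin_isSymm W z s Y) (e := sideVec (Pi.single true 1)) ?_ ?_ ?_) hpos
  · rwa [peelBilin_sideVec_single, peelForm_sideVec_single]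
  · rw [peelBilin_sideVec_single, horth]
  · nth_rw 2 [kerVec]
    simp [peelBilin_sideVec, horth]

theorem IsDegenerate.extremal_nonempty (hW : ∀ i, 0 < W i) (h : IsDegenerate W z r (c :: s) Y) :
    (extremal z c Y).Nonempty := by
  have hpos : 0 < peelWeight W z (c :: true :: true :: s) Y := by
    rw [peelWeight_pos_iff hW _ h.mem (by simpa using h.card)]
    refine fun d => (h.sideCard_le d).trans (List.Sublist.count_le d ?_)
    simp
  exact nonempty_of_sum_ne_zero hpos.ne'

theorem IsDegenerate.card_erase (h : IsDegenerate W z r (c :: s) Y) (hx : x ∈ extremal z c Y) :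
    #(Y.erase x) = s.length + 3 := by
  have := card_erase_of_mem_extremal hx
  have := h.card
  rw [List.length_cons] at this
  omega

theorem IsDegenerate.peelWeight_erase_pos (hW : ∀ i, 0 < W i)
    (h : IsDegenerate W z r (c :: s) Y) (hx : x ∈ extremal z c Y) :
    0 < peelWeight W z (c :: c :: s) (Y.erase x) := by
  rw [peelWeight_pos_iff hW _ (mem_erase_of_mem_extremal h.mem hx) (by simp [h.card_erase hx])]
  intro d
  refine (sideCard_mono (erase_subset _ _)).trans ((h.sideCard_le d).trans ?_)
  exact List.Sublist.count_le d (by simp)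

theorem IsDegenerate.peelBilin_kerVec_erase [Finite α] (hW : ∀ i, 0 < W i)
    (hrev : ∀ x y, x < y → W (true, y) * W (false, x) ≤ W (true, x) * W (false, y))
    (h : IsDegenerate W z r (c :: s) Y) (hx : x ∈ extremal z c Y) :
    peelBilin W z s (Y.erase x) (kerVec r) = 0 := by
  have hyp {x} (hx : x ∈ extremal z c Y) := isHyperbolic_peelBilin (s := s) hW hrev
    (mem_erase_of_mem_extremal h.mem hx) (h.card_erase hx)
  have hpos {x} (hx : x ∈ extremal z c Y) : 0 < peelBilin W z s (Y.erase x)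
      (sideVec (Pi.single c 1)) (sideVec (Pi.single c 1)) := by
    rw [peelBilin_sideVec_single, peelForm_sideVec_single]
    exact h.peelWeight_erase_pos hW hx
  have horth {x} (hx : x ∈ extremal z c Y) :
      peelBilin W z s (Y.erase x) (kerVec r) (sideVec (Pi.single c 1)) = 0 := by
    rw [peelBilin_sideVec_single, peelForm_kerVec_erase_eq_zero hW h.ker hx]
  have hnonpos {x} (hx : x ∈ extremal z c Y) :
      peelBilin W z s (Y.erase x) (kerVec r) (kerVec r) ≤ 0 :=
    (hyp hx).self_nonpos (hpos hx) (horth hx)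
  have hsum : 0 ≤ ∑ x ∈ extremal z c Y,
      W (c, x) * peelBilin W z s (Y.erase x) (kerVec r) (kerVec r) := by
    have hle := peelBilin_cons_le (z := z) (fun i => (hW i).le) c s Y (kerVec r)
    rw [h.ker, LinearMap.zero_apply, sum_active_filter] at hle
    refine hle.trans_eq (sum_congr rfl fun x hx => ?_)
    rw [kerVec, peelBilin_faceMap_sideVec (i := (c, x)) (mem_active.2 hx)]
  have hterm {x} (hx : x ∈ extremal z c Y) :=
    mul_nonpos_of_nonneg_of_nonpos (hW (c, x)).le (hnonpos hx)
  have hzero := (sum_eq_zero_iff_of_nonpos fun x => hterm).1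
    ((sum_nonpos fun x => hterm).antisymm hsum) x hx
  exact (hyp hx).eq_zero (peelBilin_isSymm W z s _) (hpos hx) (horth hx)
    ((mul_eq_zero_iff_left (hW _).ne').1 hzero)

theorem IsDegenerate.erase [Finite α] (hW : ∀ i, 0 < W i)
    (hrev : ∀ x y, x < y → W (true, y) * W (false, x) ≤ W (true, x) * W (false, y)) (hr : 0 < r)
    (h : IsDegenerate W z r (c :: s) Y) (hx : x ∈ extremal z c Y) :
    IsDegenerate W z r s (Y.erase x) :=
  .of_ker hW hr (mem_erase_of_mem_extremal h.mem hx) (h.card_erase hx)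
    (h.peelBilin_kerVec_erase hW hrev hx) (h.peelWeight_erase_pos hW hx)

theorem erase_subset_filter_sideLT (hcd : c ≠ d) (hzx : sideLT d z x)
    (hx : ∀ u ∈ extremal z c Y, u = x) : Y.erase x ⊆ {y ∈ Y | sideLT d y x} := by
  intro y hy
  obtain ⟨hyx, hyY⟩ := mem_erase.1 hy
  refine mem_filter.2 ⟨hyY, ?_⟩
  rcases eq_or_ne y z with rfl | hyz
  · exact hzx
  by_cases hzy : sideLT c z y
  · exact ((sideLT_of_ne hcd).1 hzy).trans hzx
  · obtain ⟨u, hu, huy⟩ := exists_mem_extremal hyY hyz hzy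
    obtain rfl := hx u hu
    exact (sideLT_of_ne hcd).1 (huy.resolve_left hyx.symm)

theorem IsDegenerate.count_add_two_lt_card_of_covBy [Finite α] (hW : ∀ i, 0 < W i)
    (hrev : ∀ x y, x < y → W (true, y) * W (false, x) ≤ W (true, x) * W (false, y)) (hr : 0 < r)
    (h : IsDegenerate W z r s Y) (hx : x ∈ Y) (hzx : sideLT d z x)
    (hcov : ∀ y ∈ Y, sideLT d z y → ¬sideLT d y x) :
    s.count d + 2 < #{y ∈ Y | sideLT d y x} := by
  induction s generalizing Y with
  | nil =>
    have hpos : 0 < sideCard z (!d) Y := card_pos.2 ⟨x, mem_filter.2 ⟨hx, sideLT_not.2 hzx⟩⟩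
    exact absurd (h.sideCard_le (!d)) (by simpa using hpos.ne')
  | cons c s ih =>
    have ih {u} (hu : u ∈ extremal z c Y) (hxu : x ≠ u) :
        s.count d + 2 < #({y ∈ Y | sideLT d y x}.erase u) := by
      rw [← filter_erase]
      exact ih (h.erase hW hrev hr hu) (mem_erase.2 ⟨hxu, hx⟩)
        fun y hy => hcov y (mem_of_mem_erase hy)
    by_cases hcd : c = d
    · subst hcd
      have hne {u} (hu : u ∈ extremal z c Y) : x ≠ u := fun hxu =>
        (mem_extremal.1 hu).2.2 z h.mem (hxu ▸ hzx)
      obtain ⟨u₀, hu₀⟩ := h.extremal_nonempty hW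
      have hlt₀ := (ih hu₀ (hne hu₀)).trans_le card_erase_le
      have hone : 1 < #{y ∈ Y | sideLT c y x} := by omega
      obtain ⟨y, hy, hyz⟩ := exists_mem_ne hone z
      obtain ⟨hyY, hyx⟩ := mem_filter.1 hy
      obtain ⟨u, hu, huy⟩ := exists_mem_extremal hyY hyz fun hzy => hcov y hyY hzy hyx
      have hux : sideLT c u x := huy.elim (fun h => h ▸ hyx) fun h => h.trans hyx
      have hlt := ih hu (hne hu)
      have hcard := card_erase_add_one
        (mem_filter.2 ⟨extremal_subset hu, hux⟩ : u ∈ ({y ∈ Y | sideLT c y x} : Finset α))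
      rw [List.count_cons_self]
      omega
    rw [List.count_cons_of_ne hcd]
    by_cases hex : ∃ u ∈ extremal z c Y, x ≠ u
    · obtain ⟨u, hu, hxu⟩ := hex
      exact (ih hu hxu).trans_le card_erase_le
    · push Not at hex
      have hsub := erase_subset_filter_sideLT hcd hzx fun u hu => (hex u hu).symm
      have hle := card_le_card hsub
      have herase := card_erase_add_one hx
      have hcard := h.card
      have hcount : s.count d ≤ s.length := List.count_le_length
      rw [List.length_cons] at hcard
      omega

theorem IsDegenerate.count_add_two_lt_card [Finite α] (hW : ∀ i, 0 < W i)
    (hrev : ∀ x y, x < y → W (true, y) * W (false, x) ≤ W (true, x) * W (false, y)) (hr : 0 < r)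
    (h : IsDegenerate W z r s Y) (hx : x ∈ Y) (hzx : sideLT d z x) :
    s.count d + 2 < #{y ∈ Y | sideLT d y x} := by
  have hwf : (Y : Set α).WellFoundedOn (sideLT d) := Y.finite_toSet.wellFoundedOn
  refine hwf.induction (P := fun x => sideLT d z x → s.count d + 2 < #{y ∈ Y | sideLT d y x}) hx
    (fun x hx ih hzx => ?_) hzx
  by_cases hcov : ∀ y ∈ Y, sideLT d z y → ¬sideLT d y x
  · exact h.count_add_two_lt_card_of_covBy hW hrev hr hx hzx hcov
  · push Not at hcov
    obtain ⟨y, hy, hzy, hyx⟩ := hcov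
    exact (ih y hy hyx hzy).trans_le
      (card_le_card (monotone_filter_right _ fun u _ hu => hu.trans hyx))

theorem IsDegenerate.eq_mul (hW : ∀ i, 0 < W i) (h : IsDegenerate W z r [] Y) (hy : y ∈ Y)
    (hyz : y ≠ z) : W (true, y) = r * W (false, y) := by
  have hincomp {u} (hu : u ∈ Y) (c) : ¬sideLT c u z ∧ ¬sideLT c z u := by
    have hempty (c) : ¬sideLT c u z := fun hlt => Nat.not_lt_zero _ <|
      (card_pos.2 ⟨u, mem_filter.2 ⟨hu, hlt⟩⟩ : 0 < sideCard z c Y).trans_le (h.sideCard_le c)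
    exact ⟨hempty c, fun hlt => hempty (!c) (sideLT_not.2 hlt)⟩
  obtain ⟨x, hx⟩ : ∃ x, (Y.erase z).erase y = {x} := card_eq_one.1 <| by
    rw [card_erase_of_mem (mem_erase.2 ⟨hyz, hy⟩), card_erase_of_mem h.mem, h.card]
    rfl
  obtain ⟨hxy, hxz, hxY⟩ : x ≠ y ∧ x ≠ z ∧ x ∈ Y := by
    simpa using (by simp [hx] : x ∈ (Y.erase z).erase y)
  have hY {u} (hu : u ∈ Y) : u = z ∨ u = y ∨ u = x := by
    by_contra! hne
    exact hne.2.2 (mem_singleton.1 (hx ▸ mem_erase.2 ⟨hne.2.1, mem_erase.2 ⟨hne.1, hu⟩⟩))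
  obtain ⟨c, hc⟩ := exists_not_sideLT y x
  have hxc : x ∈ extremal z c Y := mem_extremal.2 ⟨hxY, hxz, fun u hu => by
    rcases hY hu with rfl | rfl | rfl
    exacts [(hincomp hxY c).2, hc, sideLT_irrefl c _]⟩
  have hextremal (c) : extremal z c (Y.erase x) = {y} := by
    ext u
    rw [mem_singleton, mem_extremal, mem_erase]
    refine ⟨fun hu => ((hY hu.1.2).resolve_left hu.2.1).resolve_right hu.1.1, ?_⟩
    rintro rfl
    refine ⟨⟨hxy.symm, hy⟩, hyz, fun v hv => ?_⟩
    obtain ⟨hvx, hvY⟩ := mem_erase.1 hv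
    rcases hY hvY with rfl | rfl | rfl
    exacts [(hincomp hy c).2, sideLT_irrefl c _, absurd rfl hvx]
  have hzero := peelForm_kerVec_erase_eq_zero hW h.ker hxc
  simp only [peelForm_kerVec, peelWeight, hextremal, sum_singleton, mul_one] at hzero
  exact sub_eq_zero.1 hzero

end Degenerate

end Peelings

/-- The weight under which an element costs `ω` when it is removed below `z` and nothing when it is
removed above `z`, so that `peelWeight` counts linear extensions as `Nw` does. -/
def sideWeight {α : Type*} (ω : α → ℝ) : Bool × α → ℝ := fun i => bif i.1 then ω i.2 else 1

theorem sideWeight_pos {α : Type*} {ω : α → ℝ} (hω : ∀ x, 0 < ω x) (i : Bool × α) :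
    0 < sideWeight ω i := by
  obtain ⟨_ | _, x⟩ := i
  exacts [one_pos, hω x]

theorem sideWeight_mul_le {α : Type*} [Preorder α] {ω : α → ℝ} (hω : ∀ x y, x ≤ y → ω y ≤ ω x)
    (x y : α) (h : x < y) : sideWeight ω (true, y) * sideWeight ω (false, x) ≤
      sideWeight ω (true, x) * sideWeight ω (false, y) := by
  simpa [sideWeight] using hω x y h.le

section LinearExtensions

/-- The number of positions before (`c = true`) or after (`c = false`) the position `p`. -/
def sideRank {n : ℕ} (c : Bool) (p : Fin n) : ℕ := bif c then p else p.rev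

section SideRank

variable {n : ℕ} {p q : Fin n} {c : Bool}

theorem sideRank_add_sideRank_not (c : Bool) (p : Fin n) :
    sideRank c p + sideRank (!c) p + 1 = n := by
  cases c <;> simp only [sideRank, Fin.val_rev, Bool.not_true, Bool.not_false, cond_true,
    cond_false] <;> omega

theorem sideRank_injective (c : Bool) : Function.Injective (sideRank (n := n) c) := by
  cases c
  exacts [Fin.val_injective.comp Fin.rev_injective, Fin.val_injective]

theorem decide_lt_of_sideRank_lt (h : sideRank c q < sideRank c p) : decide (q < p) = c := by
  cases c
  · simpa using (Fin.rev_lt_rev.1 h).le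
  · simpa [sideRank] using h

theorem exists_sideRank_eq {k : ℕ} (hk : k ≤ sideRank c p) : ∃ q : Fin n, sideRank c q = k := by
  have hp := sideRank_add_sideRank_not c p
  cases c
  · exact ⟨Fin.rev ⟨k, by omega⟩, by simp [sideRank]⟩
  · exact ⟨⟨k, by omega⟩, rfl⟩

end SideRank

section Window

variable {α : Type*} [Fintype α] {σ τ : α ≃ Fin (Fintype.card α)} {m : Bool → ℕ}
  {x z : α} {c : Bool}

/-- The elements that remain when the first `m true` and the last `m false` elements of `σ` are
removed. -/
def window (m : Bool → ℕ) (σ : α ≃ Fin (Fintype.card α)) : Finset α :=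
  {y | ∀ d, m d ≤ sideRank d (σ y)}

theorem mem_window : x ∈ window m σ ↔ ∀ d, m d ≤ sideRank d (σ x) := by
  simp [window]

theorem window_zero (σ : α ≃ Fin (Fintype.card α)) : window 0 σ = univ := by
  simp [window]

theorem window_eq_of_forall_notMem (h : ∀ u ∉ window m τ, σ u = τ u) :
    window m σ = window m τ := by
  refine Subset.antisymm (fun u hu => ?_) fun u hu => ?_ <;> by_contra hnot
  · exact hnot (mem_window.2 (h u hnot ▸ mem_window.1 hu))
  · set v := τ.symm (σ u)
    have hv : τ v = σ u := τ.apply_symm_apply _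
    have hvu : v = u := by
      refine σ.injective ((h v fun hmem => hnot ?_).trans hv)
      exact mem_window.2 (hv ▸ mem_window.1 hmem)
    exact hnot (mem_window.2 (hv ▸ hvu ▸ mem_window.1 hu))

theorem window_erase [DecidableEq α] (hrank : sideRank c (σ x) = m c) :
    (window m σ).erase x = window (Function.update m c (m c + 1)) σ := by
  ext y
  have hne : y ≠ x ↔ sideRank c (σ y) ≠ m c := by
    rw [← hrank, Ne, Ne, (sideRank_injective c).eq_iff, σ.injective.eq_iff]
  rw [mem_erase, mem_window, mem_window, hne, Bool.forall_bool, Bool.forall_bool]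
  cases c <;> simp <;> omega

theorem window_eq_singleton {p : Fin (Fintype.card α)} (hm : ∀ d, m d = sideRank d p)
    (hz : z ∈ window m τ) : τ z = p ∧ window m τ = {z} := by
  have happly {u} (hu : u ∈ window m τ) : τ u = p := by
    refine sideRank_injective true ?_
    have hle := fun d => hm d ▸ mem_window.1 hu d
    have := hle true
    have := hle false
    have hu := sideRank_add_sideRank_not true (τ u)
    have hp := sideRank_add_sideRank_not true p
    rw [Bool.not_true] at hu hp
    omega
  refine ⟨happly hz, eq_singleton_iff_unique_mem.2 ⟨hz, fun u hu => ?_⟩⟩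
  exact τ.injective ((happly hu).trans (happly hz).symm)

end Window

variable {α : Type*} [Fintype α] [PartialOrder α] {σ τ : α ≃ Fin (Fintype.card α)} {m : Bool → ℕ}
  {x y z : α} {c : Bool}

theorem sideRank_lt_of_isLinExt (hσ : IsLinExt σ) (h : sideLT c x y) :
    sideRank c (σ x) < sideRank c (σ y) := by
  cases c
  exacts [Fin.rev_lt_rev.2 (hσ y x h), hσ x y h]

theorem isLinExt_trans_swap (hσ : IsLinExt σ) (hxy : (σ y : ℕ) = σ x + 1) (h : ¬x < y) :
    IsLinExt (σ.trans (Equiv.swap (σ x) (σ y))) := by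
  intro u v huv
  have hlt := hσ u v huv
  have hne : ¬(σ u = σ x ∧ σ v = σ y) := fun ⟨hu, hv⟩ =>
    h (σ.injective hu ▸ σ.injective hv ▸ huv)
  simp only [Equiv.trans_apply, Equiv.swap_apply_def, Fin.lt_def, Fin.ext_iff] at *
  split_ifs <;> omega

theorem isLinExt_trans_swap_of_sideRank (hσ : IsLinExt σ)
    (hxy : sideRank c (σ x) = sideRank c (σ y) + 1) (h : ¬sideLT c y x) :
    IsLinExt (σ.trans (Equiv.swap (σ x) (σ y))) := by
  cases c
  · refine isLinExt_trans_swap hσ ?_ h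
    simp only [sideRank, cond_false, Fin.val_rev] at hxy
    omega
  · rw [Equiv.swap_comm]
    exact isLinExt_trans_swap hσ hxy h

variable [DecidableEq α]

theorem mem_extremal_window (hσ : IsLinExt σ) (hx : x ∈ window m σ)
    (hrank : sideRank c (σ x) = m c) (hxz : x ≠ z) : x ∈ extremal z c (window m σ) :=
  mem_extremal.2 ⟨hx, hxz, fun _ hy hyx =>
    ((sideRank_lt_of_isLinExt hσ hyx).trans_eq hrank).not_ge (mem_window.1 hy c)⟩

theorem exists_isLinExt_sideRank_eq (hτ : IsLinExt τ) (hx : x ∈ extremal z c (window m τ)) :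
    ∃ σ, IsLinExt σ ∧ (∀ u ∉ window m τ, σ u = τ u) ∧ sideRank c (σ x) = m c := by
  obtain ⟨k, hk⟩ := Nat.exists_eq_add_of_le (mem_window.1 (extremal_subset hx) c)
  induction k generalizing τ with
  | zero => exact ⟨τ, hτ, fun _ _ => rfl, hk⟩
  | succ k ih =>
    have hlt := sideRank_add_sideRank_not c (τ x)
    obtain ⟨y, hy⟩ : ∃ y, sideRank c (τ y) = m c + k :=
      τ.surjective.exists.1 (exists_sideRank_eq (p := τ x) (by omega))
    have hyw : y ∈ window m τ := by
      have hx := mem_window.1 (extremal_subset hx) (!c)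
      have := sideRank_add_sideRank_not c (τ y)
      rw [mem_window]
      intro d
      rcases Bool.eq_or_eq_not d c with rfl | rfl <;> omega
    have hswap := isLinExt_trans_swap_of_sideRank hτ (hk.trans (by rw [hy, add_assoc]))
      ((mem_extremal.1 hx).2.2 y hyw)
    have hagree (u) (hu : u ∉ window m τ) : τ.trans (Equiv.swap (τ x) (τ y)) u = τ u :=
      Equiv.swap_apply_of_ne_of_ne
        (τ.injective.ne fun h => hu (h ▸ extremal_subset hx)) (τ.injective.ne fun h => hu (h ▸ hyw))
    have hwindow := window_eq_of_forall_notMem hagree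
    obtain ⟨σ, hσ, hστ, hrank⟩ := ih hswap (hwindow ▸ hx) (by simpa using hy)
    rw [hwindow] at hστ
    exact ⟨σ, hσ, fun u hu => (hστ u hu).trans (hagree u hu), hrank⟩

/-- The linear extensions that agree with `τ` outside `Y` and place `z` at `p`. -/
def completions (z : α) (p : Fin (Fintype.card α)) (τ : α ≃ Fin (Fintype.card α)) (Y : Finset α) :
    Finset (α ≃ Fin (Fintype.card α)) :=
  {σ | IsLinExt σ ∧ σ z = p ∧ ∀ x ∉ Y, σ x = τ x}

variable {p q : Fin (Fintype.card α)} {Y : Finset α} {W : Bool × α → ℝ} {s : List Bool}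

theorem completions_singleton (hτ : IsLinExt τ) : completions z (τ z) τ {z} = {τ} := by
  ext σ
  simp only [completions, mem_filter_univ, mem_singleton]
  refine ⟨fun h => Equiv.ext fun u => ?_, ?_⟩
  · rcases eq_or_ne u z with rfl | hu
    exacts [h.2.1, h.2.2 u hu]
  · rintro rfl
    exact ⟨hτ, rfl, fun _ _ => rfl⟩

theorem completions_filter_symm_eq (hx : x ∈ Y) (hagree : ∀ u ∉ Y, σ u = τ u) (hσx : σ x = q) :
    {υ ∈ completions z p τ Y | υ.symm q = x} = completions z p σ (Y.erase x) := by
  ext υ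
  simp only [completions, mem_filter, mem_univ, true_and, mem_erase, not_and_or, not_not,
    Equiv.symm_apply_eq, ← hσx]
  refine ⟨fun ⟨⟨hυ, hz, h⟩, hx⟩ => ⟨hυ, hz, fun u hu => ?_⟩, fun ⟨hυ, hz, h⟩ => ?_⟩
  · rcases hu with rfl | hu
    exacts [hx.symm, (h u hu).trans (hagree u hu).symm]
  · exact ⟨⟨hυ, hz, fun u hu => (h u (.inr hu)).trans (hagree u hu)⟩, (h x (.inl rfl)).symm⟩

theorem symm_mem_extremal_window (hσ : IsLinExt σ) (hz : σ z = p) (hq : sideRank c q = m c)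
    (hm : ∀ d, m d ≤ sideRank d p) (hc : m c < sideRank c p) :
    σ.symm q ∈ extremal z c (window m σ) := by
  have hqp := sideRank_add_sideRank_not c q
  have hp := sideRank_add_sideRank_not c p
  have hnot := hm (!c)
  refine mem_extremal_window hσ (mem_window.2 fun d => ?_) (by simpa using hq) ?_
  · rw [Equiv.apply_symm_apply]
    rcases Bool.eq_or_eq_not d c with rfl | rfl <;> omega
  · rintro h
    rw [Equiv.symm_apply_eq, hz] at h
    subst h
    omega

theorem count_add_update (c d : Bool) (s : List Bool) (m : Bool → ℕ) :
    s.count d + Function.update m c (m c + 1) d = (c :: s).count d + m d := by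
  rcases eq_or_ne c d with rfl | h
  · rw [Function.update_self, List.count_cons_self, add_right_comm, add_assoc]
  · rw [Function.update_of_ne h.symm, List.count_cons_of_ne h]

theorem sum_completions_prod_erase (hx : x ∈ extremal z c Y)
    (hc : sideRank c (σ x) < sideRank c p) :
    ∑ υ ∈ completions z p σ (Y.erase x), ∏ u ∈ Y.erase z, W (decide (υ u < p), u) =
      W (c, x) * ∑ υ ∈ completions z p σ (Y.erase x),
        ∏ u ∈ (Y.erase x).erase z, W (decide (υ u < p), u) := by
  rw [mul_sum]
  refine sum_congr rfl fun υ hυ => ?_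
  obtain ⟨-, -, hυ⟩ := mem_filter_univ _ |>.1 hυ
  rw [← mul_prod_erase _ _ (mem_erase.2 ⟨ne_of_mem_extremal hx, extremal_subset hx⟩),
    erase_right_comm, hυ x (notMem_erase _ _), decide_lt_of_sideRank_lt hc]

theorem sum_completions_eq_peelWeight (hτ : IsLinExt τ) (hz : z ∈ window m τ)
    (hs : ∀ d, s.count d + m d = sideRank d p) :
    ∑ σ ∈ completions z p τ (window m τ),
      ∏ x ∈ (window m τ).erase z, W (decide (σ x < p), x) = peelWeight W z s (window m τ) := by
  induction s generalizing m τ with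
  | nil =>
    obtain ⟨rfl, hwindow⟩ := window_eq_singleton (by simpa using hs) hz
    simp [hwindow, completions_singleton hτ, peelWeight]
  | cons c s ih =>
    have hc : m c < sideRank c p := by
      have := hs c
      rw [List.count_cons_self] at this
      omega
    obtain ⟨q, hq⟩ := exists_sideRank_eq hc.le
    have hmaps : ∀ σ ∈ completions z p τ (window m τ), σ.symm q ∈ extremal z c (window m τ) := by
      intro σ hσ
      obtain ⟨hσ, hσz, hagree⟩ := mem_filter_univ _ |>.1 hσ
      rw [← window_eq_of_forall_notMem hagree]
      exact symm_mem_extremal_window hσ hσz hq (fun d => (hs d).le.trans' (Nat.le_add_left _ _)) hc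
    rw [← sum_fiberwise_of_maps_to hmaps, peelWeight]
    refine sum_congr rfl fun x hx => ?_
    obtain ⟨σ, hσ, hagree, hrank⟩ := exists_isLinExt_sideRank_eq hτ hx
    have hσx : σ x = q := sideRank_injective c (hrank.trans hq.symm)
    rw [completions_filter_symm_eq (extremal_subset hx) hagree hσx,
      sum_completions_prod_erase hx (hrank.trans_lt hc), ← window_eq_of_forall_notMem hagree,
      window_erase hrank]
    congr 1
    refine ih hσ ?_ fun d => ?_
    · rw [← window_erase hrank, window_eq_of_forall_notMem hagree]
      exact mem_erase.2 ⟨(ne_of_mem_extremal hx).symm, hz⟩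
    · rw [count_add_update, hs d]

theorem IsDegenerate.eq_mul_of_isLinExt {r : ℝ} (hW : ∀ i, 0 < W i)
    (hrev : ∀ x y, x < y → W (true, y) * W (false, x) ≤ W (true, x) * W (false, y)) (hr : 0 < r)
    (hσ : IsLinExt σ) (h : IsDegenerate W z r s (window m σ))
    (hs : ∀ d, s.count d + m d + 1 = sideRank d (σ z)) (hxz : x ≠ z)
    (hx : ∀ d, sideRank d (σ z) ≤ sideRank d (σ x) + 1) : W (true, x) = r * W (false, x) := by
  induction s generalizing m with
  | nil =>
    refine h.eq_mul hW (mem_window.2 fun d => ?_) hxz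
    simpa [← hs d] using hx d
  | cons c s ih =>
    have hm (d) : m d < sideRank d (σ z) := by
      have := hs d
      omega
    obtain ⟨q, hq⟩ := exists_sideRank_eq (hm c).le
    have hmem := symm_mem_extremal_window hσ rfl hq (fun d => (hm d).le) (hm c)
    have herase := window_erase (x := σ.symm q) ((congrArg _ (σ.apply_symm_apply q)).trans hq)
    exact ih (herase ▸ h.erase hW hrev hr hmem) fun d => by rw [count_add_update, hs d]

theorem Nw_eq_peelWeight (hτ : IsLinExt τ) (ω : α → ℝ) (z : α) {k : ℕ} (hk : s.count true + 1 = k)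
    (hn : s.count false + k = Fintype.card α) : Nw ω z k = peelWeight (sideWeight ω) z s univ := by
  let p : Fin (Fintype.card α) := ⟨s.count true, by omega⟩
  have hs (d) : s.count d + (0 : Bool → ℕ) d = sideRank d p := by
    cases d <;> simp [sideRank, p]; omega
  rw [← window_zero τ, ← sum_completions_eq_peelWeight hτ (window_zero τ ▸ mem_univ z) hs,
    window_zero, Nw]
  refine sum_congr ?_ fun σ hσ => ?_
  · ext σ
    simp [completions, p, Fin.ext_iff, ← hk]
  · obtain ⟨-, hσz, -⟩ := mem_filter_univ _ |>.1 hσ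
    rw [← hσz, prod_filter, ← mul_prod_erase _ _ (mem_univ z), if_neg (lt_irrefl _), one_mul]
    exact prod_congr rfl fun x _ => by by_cases h : σ x < σ z <;> simp [sideWeight, h]

end LinearExtensions

section Equality

theorem sq_eq_mul_iff_exists {a b c : ℝ} (ha : 0 ≤ a) (hb : 0 < b) (hc : 0 ≤ c) :
    b ^ 2 = a * c ↔ ∃ r, 0 < r ∧ c = r * b ∧ r * b = r ^ 2 * a := by
  constructor
  · intro h
    have hc : 0 < c := pos_of_mul_pos_right (h ▸ pow_pos hb 2) ha
    refine ⟨c / b, div_pos hc hb, (div_mul_cancel₀ c hb.ne').symm, ?_⟩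
    field_simp
    rw [h, mul_comm]
  · rintro ⟨r, hr, rfl, h⟩
    have hb : b = r * a := mul_left_cancel₀ hr.ne' (by rw [h, pow_two, mul_assoc])
    rw [pow_two, mul_left_comm, ← mul_assoc, ← hb]

theorem exists_list_count_eq {k n : ℕ} (hk : 1 < k) (hn : k < n) :
    ∃ s : List Bool, s.count true + 2 = k ∧ s.count false + k + 1 = n := by
  refine ⟨.replicate (k - 2) true ++ .replicate (n - k - 1) false, ?_⟩
  simp only [List.count_append, List.count_replicate]
  simp
  omega

theorem prod_lt_trans_swap {α : Type*} [Fintype α] {n : ℕ} {σ : α ≃ Fin n} {p q : Fin n} {z : α}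
    (ω : α → ℝ) (hpq : (q : ℕ) = p + 1) (hz : σ z = p) :
    ∏ x with (σ.trans (Equiv.swap p q)) x < (σ.trans (Equiv.swap p q)) z, ω x =
      ω (σ.symm q) * ∏ x with σ x < σ z, ω x := by
  have hset : ({x | (σ.trans (Equiv.swap p q)) x < (σ.trans (Equiv.swap p q)) z} : Finset α) =
      insert (σ.symm q) ({x | σ x < σ z} : Finset α) := by
    ext x
    simp only [mem_filter_univ, mem_insert, Equiv.trans_apply, hz, Equiv.swap_apply_left,
      Equiv.eq_symm_apply, Equiv.swap_apply_def, Fin.ext_iff, Fin.lt_def]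
    split_ifs <;> omega
  rw [hset, prod_insert]
  simp only [mem_filter_univ, Equiv.apply_symm_apply, hz, Fin.lt_def]
  omega

variable {α : Type*} [Fintype α] [PartialOrder α] {σ : α ≃ Fin (Fintype.card α)} {ω : α → ℝ}
  {x z : α} {p q : Fin (Fintype.card α)} {k : ℕ} {r : ℝ}

theorem card_sideLT_le_sideRank (hσ : IsLinExt σ) (c : Bool) (x : α) :
    #{y | sideLT c y x} ≤ sideRank c (σ x) := by
  rw [← card_range (sideRank c (σ x))]
  refine card_le_card_of_injOn (fun y => sideRank c (σ y)) (fun y hy => ?_)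
    ((sideRank_injective c).comp σ.injective).injOn
  exact mem_coe.2 (mem_range.2 (sideRank_lt_of_isLinExt hσ (by simpa using hy)))

theorem numBelow_le_of_isLinExt (hσ : IsLinExt σ) (x : α) : numBelow x ≤ σ x :=
  card_sideLT_le_sideRank hσ true x

theorem numAbove_le_of_isLinExt (hσ : IsLinExt σ) (x : α) : numAbove x ≤ (σ x).rev :=
  card_sideLT_le_sideRank hσ false x

variable [DecidableEq α]

theorem Nw_nonneg (hω : ∀ x, 0 ≤ ω x) (z : α) (k : ℕ) : 0 ≤ Nw ω z k :=
  sum_nonneg fun _ _ => prod_nonneg fun x _ => hω x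

theorem exists_isLinExt_of_Nw_pos (h : 0 < Nw ω z k) :
    ∃ σ : α ≃ Fin (Fintype.card α), IsLinExt σ := by
  obtain ⟨σ, hσ⟩ := nonempty_of_sum_ne_zero h.ne'
  exact ⟨σ, (mem_filter.1 hσ).2.1⟩

theorem Nw_succ_eq_mul (hpq : (q : ℕ) = p + 1)
    (hp : ∀ σ, IsLinExt σ → σ z = p → ¬z < σ.symm q ∧ ω (σ.symm q) = r)
    (hq : ∀ σ, IsLinExt σ → σ z = q → ¬σ.symm p < z) : Nw ω z (q + 1) = r * Nw ω z (p + 1) := by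
  simp only [Nw, add_tsub_cancel_right, ← Fin.ext_iff]
  rw [mul_sum]
  symm
  refine sum_nbij' (·.trans (Equiv.swap p q)) (·.trans (Equiv.swap p q)) ?_ ?_ ?_ ?_ ?_
  · intro σ h
    obtain ⟨hσ, rfl⟩ := mem_filter_univ _ |>.1 h
    have hswap := isLinExt_trans_swap hσ (y := σ.symm q) (by simpa using hpq) (hp σ hσ rfl).1
    simpa using hswap
  · intro σ h
    obtain ⟨hσ, rfl⟩ := mem_filter_univ _ |>.1 h
    have hswap := isLinExt_trans_swap hσ (x := σ.symm p) (by simpa using hpq) (hq σ hσ rfl)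
    simpa using hswap
  · exact fun σ _ => by ext; simp
  · exact fun σ _ => by ext; simp
  · intro σ h
    obtain ⟨hσ, hz⟩ := mem_filter_univ _ |>.1 h
    rw [prod_lt_trans_swap ω hpq hz, (hp σ hσ hz).2]

theorem Nw_eq_mul_of_lt_numBelow_of_lt_numAbove (hk1 : 1 < k) (hk2 : k < Fintype.card α)
    (hbelow : ∀ x, z < x → k < numBelow x)
    (habove : ∀ x, x < z → Fintype.card α - k + 1 < numAbove x)
    (hω : ∀ σ : α ≃ Fin (Fintype.card α), IsLinExt σ → (σ z : ℕ) = k - 1 →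
      (∀ x, (σ x : ℕ) = k - 2 → ω x = r) ∧ ∀ x, (σ x : ℕ) = k → ω x = r) :
    Nw ω z (k + 1) = r * Nw ω z k ∧ Nw ω z k = r * Nw ω z (k - 1) := by
  obtain ⟨j, rfl⟩ : ∃ j, k = j + 2 := ⟨k - 2, by omega⟩
  let p₀ : Fin (Fintype.card α) := ⟨j, by omega⟩
  let p₁ : Fin (Fintype.card α) := ⟨j + 1, by omega⟩
  let p₂ : Fin (Fintype.card α) := ⟨j + 2, hk2⟩
  have hup {σ} {q : Fin _} (hσ : IsLinExt σ) (hq : (q : ℕ) ≤ j + 2) : ¬z < σ.symm q := fun hlt => by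
    have := (hbelow _ hlt).trans_le (numBelow_le_of_isLinExt hσ _)
    rw [Equiv.apply_symm_apply] at this
    omega
  have hdown {σ} {q : Fin _} (hσ : IsLinExt σ) (hq : j ≤ q) : ¬σ.symm q < z := fun hlt => by
    have := (habove _ hlt).trans_le (numAbove_le_of_isLinExt hσ _)
    rw [Equiv.apply_symm_apply, Fin.val_rev] at this
    omega
  constructor
  · refine Nw_succ_eq_mul (p := p₁) (q := p₂) rfl (fun σ hσ hz => ⟨hup hσ le_rfl, ?_⟩)
      fun σ hσ _ => hdown hσ (Nat.le_succ j)
    exact (hω σ hσ (Fin.ext_iff.1 hz)).2 _ (by simp [p₂])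
  · refine Nw_succ_eq_mul (p := p₀) (q := p₁) rfl
      (fun σ hσ hz => ⟨hup hσ (Nat.le_succ _), ?_⟩) fun σ hσ _ => hdown hσ le_rfl
    have hswap := isLinExt_trans_swap hσ (x := z) (y := σ.symm p₁) (by simp [hz, p₀, p₁])
      (hup hσ (Nat.le_succ _))
    exact (hω _ hswap (by simp [p₁])).1 _ (by simp [hz, p₀])

theorem exists_isDegenerate_of_Nw_eq_mul (hω : ∀ x, 0 < ω x) (hrev : ∀ x y, x ≤ y → ω y ≤ ω x)
    (hk1 : 1 < k) (hk2 : k < Fintype.card α) (hr : 0 < r) (hpos : 0 < Nw ω z k)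
    (hsucc : Nw ω z (k + 1) = r * Nw ω z k) (hpred : Nw ω z k = r * Nw ω z (k - 1)) :
    ∃ s : List Bool, s.count true + 2 = k ∧ s.count false + k + 1 = Fintype.card α ∧
      IsDegenerate (sideWeight ω) z r s univ := by
  obtain ⟨s, htrue, hfalse⟩ := exists_list_count_eq hk1 hk2
  obtain ⟨τ, hτ⟩ := exists_isLinExt_of_Nw_pos hpos
  have hNw_succ : Nw ω z (k + 1) = peelWeight (sideWeight ω) z (true :: true :: s) univ :=
    Nw_eq_peelWeight hτ ω z (by simpa using htrue) (by simpa [add_assoc] using hfalse)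
  have hNw : Nw ω z k = peelWeight (sideWeight ω) z (true :: false :: s) univ :=
    Nw_eq_peelWeight hτ ω z (by simp; omega) (by simp; omega)
  have hNw_pred : Nw ω z (k - 1) = peelWeight (sideWeight ω) z (false :: false :: s) univ :=
    Nw_eq_peelWeight hτ ω z (by simp; omega) (by simp; omega)
  have hlength := List.count_true_add_count_false s
  refine ⟨s, htrue, hfalse, .of_ratio (sideWeight_pos hω) (sideWeight_mul_le hrev) hr (mem_univ z)
    (by rw [card_univ]; omega) (fun c => ?_) (hNw_succ ▸ hsucc ▸ mul_pos hr hpos)⟩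
  cases c
  · rw [← hNw, ← hNw_pred, hpred]
  · rw [peelWeight_swap false, ← hNw_succ, ← hNw, hsucc]

theorem lt_numBelow_and_lt_numAbove_and_eq_of_Nw_eq_mul (hω : ∀ x, 0 < ω x)
    (hrev : ∀ x y, x ≤ y → ω y ≤ ω x)
    (hk1 : 1 < k) (hk2 : k < Fintype.card α) (hr : 0 < r) (hpos : 0 < Nw ω z k)
    (hsucc : Nw ω z (k + 1) = r * Nw ω z k) (hpred : Nw ω z k = r * Nw ω z (k - 1)) :
    (∀ x, z < x → k < numBelow x) ∧ (∀ x, x < z → Fintype.card α - k + 1 < numAbove x) ∧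
      ∀ σ : α ≃ Fin (Fintype.card α), IsLinExt σ → (σ z : ℕ) = k - 1 →
        (∀ x, (σ x : ℕ) = k - 2 → ω x = r) ∧ ∀ x, (σ x : ℕ) = k → ω x = r := by
  obtain ⟨s, htrue, hfalse, hdeg⟩ :=
    exists_isDegenerate_of_Nw_eq_mul hω hrev hk1 hk2 hr hpos hsucc hpred
  have hcard {d x} (hx : sideLT d z x) : s.count d + 2 < #{y | sideLT d y x} :=
    hdeg.count_add_two_lt_card (sideWeight_pos hω) (sideWeight_mul_le hrev) hr (mem_univ x) hx
  refine ⟨fun x hx => htrue.symm.trans_lt (hcard (d := true) hx), fun x hx => ?_,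
    fun σ hσ hσz => ?_⟩
  · have habove : s.count false + 2 < numAbove x := hcard (d := false) hx
    omega
  have hadj {x} (hx : (σ x : ℕ) + 2 = k ∨ (σ x : ℕ) = k) : ω x = r := by
    have hxz : x ≠ z := by
      rintro rfl
      omega
    have heq := IsDegenerate.eq_mul_of_isLinExt (m := 0) (sideWeight_pos hω)
      (sideWeight_mul_le hrev) hr hσ (window_zero σ ▸ hdeg) (z := z) (x := x)
    refine (heq ?_ hxz ?_).trans (mul_one r) <;> intro d <;>
      cases d <;> simp only [sideRank, Fin.val_rev, Pi.zero_apply, cond_true, cond_false] <;> omega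
  exact ⟨fun x hx => hadj (.inl (by omega)), fun x hx => hadj (.inr hx)⟩

end Equality

end WeightedStanley

open WeightedStanley

/-- **Equality conditions for the weighted Stanley inequality.**  Suppose `N_ω(k) > 0`.
Then the following are equivalent: (a) `N_ω(k)² = N_ω(k-1)·N_ω(k+1)`;
(b) there is `s > 0` with `N_ω(k+1) = s·N_ω(k) = s²·N_ω(k-1)`;
(c) there is `s > 0` such that `f(x) > k` for all `x ≻ z`, `g(x) > n - k + 1` for all
`x ≺ z`, and `ω(L⁻¹(k-1)) = ω(L⁻¹(k+1)) = s` for every linear extension `L` with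
`L(z) = k`. -/
theorem weighted_stanley_equality
    (ω : X → ℝ) (hω : ∀ x, 0 < ω x)
    (hrev : ∀ x y : X, x ≤ y → ω y ≤ ω x)
    (z : X) (k : ℕ) (hk1 : 1 < k) (hk2 : k < Fintype.card X)
    (hpos : 0 < Nw ω z k) :
    ((Nw ω z k) ^ 2 = Nw ω z (k - 1) * Nw ω z (k + 1) ↔
        ∃ s : ℝ, 0 < s ∧
          Nw ω z (k + 1) = s * Nw ω z k ∧
          s * Nw ω z k = s ^ 2 * Nw ω z (k - 1)) ∧
      ((∃ s : ℝ, 0 < s ∧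
          Nw ω z (k + 1) = s * Nw ω z k ∧
          s * Nw ω z k = s ^ 2 * Nw ω z (k - 1)) ↔
        ∃ s : ℝ, 0 < s ∧
          (∀ x : X, z < x → k < numBelow x) ∧
          (∀ x : X, x < z → Fintype.card X - k + 1 < numAbove x) ∧
          (∀ σ : X ≃ Fin (Fintype.card X), IsLinExt σ → (σ z : ℕ) = k - 1 →
            (∀ x : X, (σ x : ℕ) = k - 2 → ω x = s) ∧
            (∀ x : X, (σ x : ℕ) = k → ω x = s))) := by
  have hnonneg := Nw_nonneg (fun x => (hω x).le) z
  refine ⟨sq_eq_mul_iff_exists (hnonneg _) hpos (hnonneg _),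
    exists_congr fun r => and_congr_right fun hr => ?_⟩
  rw [show r * Nw ω z k = r ^ 2 * Nw ω z (k - 1) ↔ Nw ω z k = r * Nw ω z (k - 1) by
    rw [pow_two, mul_assoc, mul_right_inj' hr.ne']]
  constructor
  · rintro ⟨hsucc, hpred⟩
    exact lt_numBelow_and_lt_numAbove_and_eq_of_Nw_eq_mul hω hrev hk1 hk2 hr hpos hsucc hpred
  · rintro ⟨hbelow, habove, hweight⟩
    exact Nw_eq_mul_of_lt_numBelow_of_lt_numAbove hk1 hk2 hbelow habove hweight
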